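/- arXiv:1808.06513 — 3 statements merged into one kernel-verified Lean document; each statement's English description precedes it below -/
import Mathlib

section
/- Let C ⊆ G be horizontally convex and assume the Hörmander condition. Let P = (z,t) belong to the closure of C and suppose there is ξ ∈ Z such that (z,t)·(ξ,0) ∈ Int(C). Then there exists ε > 0 such that for every (z',t') in the closure of C with Euclidean distance |(z',t') − (z,t)| < ε and for every s ∈ (0,1], the left-translated box (z',t')·(sξ,0)·{(w,τ) ∈ Z × T : |w| < εs and |τ| < ε²s²} is contained in C (here |·| denotes the Euclidean norm on Z and on T, and the translated box is the set of all (z',t')·(sξ,0)·(w,τ) with (w,τ) as indicated). -/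
/- Step-two Carnot group `G = Z × T` with `Z = ℝ^m`, `T = ℝ^ℓ` and group law
`(z,t)·(ζ,τ) = (z+ζ, t+τ+Q(z,ζ))` for a bilinear skew-symmetric `Q`. -/

noncomputable section

/-- The first layer `Z = ℝ^m`. -/
abbrev ZS (m : ℕ) := EuclideanSpace ℝ (Fin m)

/-- The second layer `T = ℝ^ℓ`. -/
abbrev TS (l : ℕ) := EuclideanSpace ℝ (Fin l)

/-- Group law of the step-two group. -/
def gmul {m l : ℕ} (Q : ZS m →ₗ[ℝ] ZS m →ₗ[ℝ] TS l)
    (p q : ZS m × TS l) : ZS m × TS l :=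
  (p.1 + q.1, p.2 + q.2 + Q p.1 q.1)

/-- Horizontal convexity. -/
def HConvex {m l : ℕ} (Q : ZS m →ₗ[ℝ] ZS m →ₗ[ℝ] TS l)
    (C : Set (ZS m × TS l)) : Prop :=
  ∀ p : ZS m × TS l, ∀ u : ZS m, p ∈ C → gmul Q p (u, 0) ∈ C →
    ∀ s : ℝ, 0 ≤ s → s ≤ 1 → gmul Q p (s • u, 0) ∈ C

/-!
Let `F` be the filter of neighbourhoods of `P` within `C`. Horizontal convexity and
`P · (ξ, 0) ∈ interior C` show that for `v` near `ξ` and small `h ≥ 0` the translation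
`p ↦ p · (h • v, 0)` carries `F` to itself, and such translations can be composed. Four of them,
with `v` running through perturbations of `ξ` whose zeroth and first moments cancel, compose to
`p ↦ p · (4 h • ξ, 2 h² • Q a b)`. By the Hörmander condition finitely many of these produce every
displacement `(k h • ξ, h² • τ)` with `τ` small. Making such a displacement at scale `h = c s`, with
`c` a small constant, and then one long horizontal step in a direction near `ξ` reaches every point
of the box at `p · (s • ξ, 0)`, for all `p ∈ C` near `P`. For `p` in the closure of `C`, each point
of the box at `p · (s • ξ, 0)` also lies in the corresponding (open) box of a nearby point of `C`.
-/

open Filter Set Topology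

theorem exists_tendsto_zero_mul_eq {X : Type*} {L : Filter X} {c : X → ℝ}
    (hc : Tendsto c L (𝓝 0)) :
    ∃ a b : X → ℝ, Tendsto a L (𝓝 0) ∧ Tendsto b L (𝓝 0) ∧ ∀ x, a x * b x = c x := by
  have hsqrt : Tendsto (fun x => √|c x|) L (𝓝 0) := by
    simpa using hc.abs.sqrt
  refine ⟨fun x => c x / √|c x|, fun x => √|c x|, ?_, hsqrt, fun x => ?_⟩
  · refine squeeze_zero_norm (fun x => le_of_eq ?_) hsqrt
    rw [norm_div, Real.norm_eq_abs, Real.norm_of_nonneg (Real.sqrt_nonneg _), Real.div_sqrt]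
  · rcases eq_or_ne (c x) 0 with h0 | h0
    · simp [h0]
    · exact div_mul_cancel₀ _ (by simpa [Real.sqrt_eq_zero'] using h0)

theorem dist_le_sqrt_norm_sq_add_norm_sq {E F : Type*} [SeminormedAddCommGroup E]
    [SeminormedAddCommGroup F] (p q : E × F) :
    dist p q ≤ √(‖p.1 - q.1‖ ^ 2 + ‖p.2 - q.2‖ ^ 2) := by
  rw [Prod.dist_eq, dist_eq_norm, dist_eq_norm]
  exact max_le (Real.le_sqrt_of_sq_le (le_add_of_nonneg_right (sq_nonneg _)))
    (Real.le_sqrt_of_sq_le (le_add_of_nonneg_left (sq_nonneg _)))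

section StepTwoGroup

variable {m l : ℕ} {Q : ZS m →ₗ[ℝ] ZS m →ₗ[ℝ] TS l}

theorem gmul_assoc (p q r : ZS m × TS l) : gmul Q (gmul Q p q) r = gmul Q p (gmul Q q r) := by
  ext1 <;> simp only [gmul, map_add, LinearMap.add_apply] <;> abel

theorem gmul_zero (p : ZS m × TS l) : gmul Q p 0 = p := by
  simp [gmul]

theorem gmul_neg_gmul (hQ : Q.IsAlt) (p q : ZS m × TS l) : gmul Q p (gmul Q (-p) q) = q := by
  ext1
  · simp [gmul]
  · simp only [gmul, Prod.fst_neg, Prod.snd_neg, map_add, map_neg, LinearMap.neg_apply,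
      hQ.self_eq_zero]
    abel

theorem neg_gmul_gmul (hQ : Q.IsAlt) (p q : ZS m × TS l) : gmul Q (-p) (gmul Q p q) = q := by
  simpa only [neg_neg] using gmul_neg_gmul hQ (-p) q

theorem gmul_smul_smul (hQ : Q.IsAlt) (ξ : ZS m) (r s : ℝ) (σ τ : TS l) :
    gmul Q (r • ξ, σ) (s • ξ, τ) = ((r + s) • ξ, σ + τ) := by
  simp [gmul, add_smul, hQ.self_eq_zero]

/- With `eᵢ` the four perturbations `a, b - 2a, a - 2b, b`, the vertical component is
`h² ∑_{i<j} Q (ξ + eᵢ) (ξ + eⱼ)`; the terms in `Q ξ a` and `Q ξ b` vanish because `∑ eᵢ = 0` and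
`∑ i eᵢ = 0`. -/
theorem gmul_four_steps (hQ : Q.IsAlt) (ξ a b : ZS m) (h : ℝ) :
    gmul Q (gmul Q (gmul Q (h • (ξ + a), 0) (h • (ξ + (b - (2 : ℝ) • a)), 0))
      (h • (ξ + (a - (2 : ℝ) • b)), 0)) (h • (ξ + b), 0) = ((4 * h) • ξ, (2 * h ^ 2) • Q a b) := by
  have haξ : Q a ξ = -Q ξ a := (hQ.neg ξ a).symm
  have hbξ : Q b ξ = -Q ξ b := (hQ.neg ξ b).symm
  have hba : Q b a = -Q a b := (hQ.neg a b).symm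
  ext1
  · simp only [gmul]
    module
  · simp only [gmul, map_add, map_sub, map_smul, LinearMap.add_apply, LinearMap.sub_apply,
      LinearMap.smul_apply, hQ.self_eq_zero, haξ, hbξ, hba]
    module

theorem gmul_smul_add_inv_smul (hQ : Q.IsAlt) {d : ℝ} (hd : d ≠ 0) (s : ℝ) (ξ ω : ZS m) (τ : TS l) :
    gmul Q (((1 - d) * s) • ξ, s ^ 2 • (τ + d • Q ξ ω)) ((d * s) • (ξ + d⁻¹ • ω), 0) =
      gmul Q (s • ξ, 0) (s • ω, s ^ 2 • τ) := by
  have hω : (d * s) • d⁻¹ • ω = s • ω := by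
    rw [smul_smul, mul_right_comm, mul_inv_cancel₀ hd, one_mul]
  ext1
  · simp only [gmul, smul_add, hω]
    module
  · simp only [gmul, smul_add, hω, map_add, map_smul, LinearMap.smul_apply, hQ.self_eq_zero]
    module

theorem continuous_gmul :
    Continuous fun x : (ZS m × TS l) × (ZS m × TS l) => gmul Q x.1 x.2 := by
  have hQ : Continuous fun x : (ZS m × TS l) × (ZS m × TS l) => Q x.1.1 x.2.1 :=
    Q.toContinuousBilinearMap.continuous₂.comp (continuous_fst.fst.prodMk continuous_snd.fst)
  exact (continuous_fst.fst.add continuous_snd.fst).prodMk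
    ((continuous_fst.snd.add continuous_snd.snd).add hQ)

theorem exists_gmul_eq_of_mem_closure (hQ : Q.IsAlt) {C U V : Set (ZS m × TS l)}
    {p g : ZS m × TS l} (a : ZS m × TS l) (hp : p ∈ closure C) (hV : V ∈ 𝓝 p) (hU : U ∈ 𝓝 g) :
    ∃ q ∈ C ∩ V, ∃ g' ∈ U, gmul Q (gmul Q q a) g' = gmul Q (gmul Q p a) g := by
  have hcont : Continuous fun q => gmul Q (-gmul Q q a) (gmul Q (gmul Q p a) g) := by
    have hright : Continuous fun q => gmul Q q a :=
      continuous_gmul.comp (continuous_id.prodMk continuous_const)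
    exact continuous_gmul.comp (hright.neg.prodMk continuous_const)
  have hU' : ∀ᶠ q in 𝓝 p, gmul Q (-gmul Q q a) (gmul Q (gmul Q p a) g) ∈ U :=
    hcont.continuousAt.eventually_mem (by rwa [neg_gmul_gmul hQ])
  obtain ⟨q, hqC, hqV, hqU⟩ :=
    ((mem_closure_iff_frequently.mp hp).and_eventually ((eventually_mem_set.mpr hV).and hU')).exists
  exact ⟨q, ⟨hqC, hqV⟩, _, hqU, gmul_neg_gmul hQ _ _⟩

/-- The homogeneous box of radius `r` about the identity of the group: it is comparable to the
Carnot–Carathéodory ball of radius `r`. -/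
def homogeneousBox (m l : ℕ) (r : ℝ) : Set (ZS m × TS l) :=
  {g | ‖g.1‖ < r ∧ ‖g.2‖ < r ^ 2}

theorem isOpen_homogeneousBox (r : ℝ) : IsOpen (homogeneousBox m l r) :=
  (isOpen_lt continuous_fst.norm continuous_const).inter
    (isOpen_lt continuous_snd.norm continuous_const)

theorem homogeneousBox_subset_ball {r : ℝ} (hr : r ≤ 1) :
    homogeneousBox m l r ⊆ Metric.ball 0 r := by
  rintro g ⟨hg₁, hg₂⟩
  have hr₀ : 0 ≤ r := (norm_nonneg _).trans hg₁.le
  rw [mem_ball_zero_iff, Prod.norm_def]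
  exact max_lt hg₁ (hg₂.trans_le (pow_le_of_le_one hr₀ hr two_ne_zero))

theorem dilation_inv_mem_homogeneousBox {r s : ℝ} (hs : 0 < s) {g : ZS m × TS l}
    (hg : g ∈ homogeneousBox m l (r * s)) :
    (s⁻¹ • g.1, (s ^ 2)⁻¹ • g.2) ∈ homogeneousBox m l r := by
  refine ⟨?_, ?_⟩
  · rw [norm_smul, Real.norm_of_nonneg (by positivity), inv_mul_lt_iff₀' hs]
    exact hg.1
  · rw [norm_smul, Real.norm_of_nonneg (by positivity), inv_mul_lt_iff₀' (by positivity),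
      ← mul_pow]
    exact hg.2

/-- Right translation by the displacements `u x` carries the filter `F` to itself along `L`. For
`F = 𝓝[C] P` this says that `p · u x` is in `C` and near `P` whenever `p` is, for `x` far along
`L`. -/
def TranslationStable {X : Type*} (Q : ZS m →ₗ[ℝ] ZS m →ₗ[ℝ] TS l) (F : Filter (ZS m × TS l))
    (L : Filter X) (u : X → ZS m × TS l) : Prop :=
  Tendsto (fun q : (ZS m × TS l) × X => gmul Q q.1 (u q.2)) (F ×ˢ L) F

namespace TranslationStable

variable {X : Type*} {F : Filter (ZS m × TS l)} {L : Filter X} {u v : X → ZS m × TS l}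

theorem zero : TranslationStable Q F L fun _ => 0 := by
  simpa only [TranslationStable, gmul_zero] using tendsto_fst

theorem mul (hu : TranslationStable Q F L u) (hv : TranslationStable Q F L v) :
    TranslationStable Q F L fun x => gmul Q (u x) (v x) := by
  simpa only [TranslationStable, Function.comp_def, gmul_assoc] using
    Tendsto.comp hv (hu.prodMk tendsto_snd)

theorem sum {ι : Type*} (hQ : Q.IsAlt) {ξ : ZS m} {r : ι → X → ℝ} {σ : ι → X → TS l}
    (s : Finset ι) (h : ∀ i ∈ s, TranslationStable Q F L fun x => (r i x • ξ, σ i x)) :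
    TranslationStable Q F L fun x => ((∑ i ∈ s, r i x) • ξ, ∑ i ∈ s, σ i x) := by
  classical
  induction s using Finset.induction_on with
  | empty => simpa only [Finset.sum_empty, zero_smul, Prod.mk_zero_zero] using zero
  | insert i s his ih =>
    have hi := h i (Finset.mem_insert_self i s)
    have hs := ih fun j hj => h j (Finset.mem_insert_of_mem hj)
    simpa only [Finset.sum_insert his, gmul_smul_smul hQ] using hi.mul hs

end TranslationStable

variable {C : Set (ZS m × TS l)} {P : ZS m × TS l} {ξ : ZS m}

theorem eventually_forall_gmul_smul_mem (hC : HConvex Q C)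
    (hξ : gmul Q P (ξ, 0) ∈ interior C) :
    ∀ᶠ x in 𝓝[C] P ×ˢ 𝓝 ξ, ∀ r ∈ Icc (0 : ℝ) 1, gmul Q x.1 (r • x.2, 0) ∈ C := by
  have hcont : Continuous fun x : (ZS m × TS l) × ZS m => gmul Q x.1 (x.2, 0) :=
    continuous_gmul.comp (by fun_prop : Continuous fun x : (ZS m × TS l) × ZS m =>
      (x.1, ((x.2, 0) : ZS m × TS l)))
  have hend : ∀ᶠ x in 𝓝[C] P ×ˢ 𝓝 ξ, gmul Q x.1 (x.2, 0) ∈ C := by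
    have : ∀ᶠ x in 𝓝 P ×ˢ 𝓝 ξ, gmul Q x.1 (x.2, 0) ∈ C := by
      rw [← nhds_prod_eq]
      exact hcont.continuousAt.eventually_mem (mem_interior_iff_mem_nhds.mp hξ)
    exact this.filter_mono (prod_mono_left _ nhdsWithin_le_nhds)
  have hstart : ∀ᶠ x in 𝓝[C] P ×ˢ 𝓝 ξ, x.1 ∈ C := tendsto_fst self_mem_nhdsWithin
  filter_upwards [hstart, hend] with x hx hxv r hr using hC x.1 x.2 hx hxv r hr.1 hr.2

theorem translationStable_smul {X : Type*} {L : Filter X} {h : X → ℝ} {v : X → ZS m}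
    (hC : HConvex Q C) (hξ : gmul Q P (ξ, 0) ∈ interior C)
    (hh : Tendsto h L (𝓝[≥] 0)) (hv : Tendsto v L (𝓝 ξ)) :
    TranslationStable Q (𝓝[C] P) L fun x => (h x • v x, 0) := by
  refine tendsto_nhdsWithin_iff.mpr ⟨?_, ?_⟩
  · have hdispl : Tendsto (fun x => ((h x • v x, 0) : ZS m × TS l)) L (𝓝 0) := by
      have hsmul := (hh.mono_right nhdsWithin_le_nhds).smul hv
      rw [zero_smul] at hsmul
      exact hsmul.prodMk_nhds tendsto_const_nhds
    have hpair := (tendsto_fst.mono_right nhdsWithin_le_nhds).prodMk_nhds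
      (hdispl.comp (tendsto_snd (f := 𝓝[C] P)))
    simpa only [Function.comp_def, gmul_zero] using
      (continuous_gmul (Q := Q)).continuousAt.tendsto.comp hpair
  · have hsegment : ∀ᶠ q in 𝓝[C] P ×ˢ L, ∀ r ∈ Icc (0 : ℝ) 1,
        gmul Q q.1 (r • v q.2, 0) ∈ C :=
      (tendsto_fst.prodMk (hv.comp tendsto_snd)).eventually
        (eventually_forall_gmul_smul_mem hC hξ)
    have hsmall : ∀ᶠ q in 𝓝[C] P ×ˢ L, h q.2 ∈ Icc (0 : ℝ) 1 :=
      (hh.comp tendsto_snd).eventually (Icc_mem_nhdsGE zero_lt_one)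
    filter_upwards [hsegment, hsmall] with q hq hhq using hq _ hhq

theorem translationStable_bracket {X : Type*} {L : Filter X} {h : X → ℝ} {a b : X → ZS m}
    (hQ : Q.IsAlt) (hC : HConvex Q C) (hξ : gmul Q P (ξ, 0) ∈ interior C)
    (hh : Tendsto h L (𝓝[≥] 0)) (ha : Tendsto a L (𝓝 0)) (hb : Tendsto b L (𝓝 0)) :
    TranslationStable Q (𝓝[C] P) L
      fun x => ((4 * h x) • ξ, (2 * h x ^ 2) • Q (a x) (b x)) := by
  have step {e : X → ZS m} (he : Tendsto e L (𝓝 0)) :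
      TranslationStable Q (𝓝[C] P) L fun x => (h x • (ξ + e x), 0) :=
    translationStable_smul hC hξ hh (by simpa only [add_zero] using he.const_add ξ)
  have hba : Tendsto (fun x => b x - (2 : ℝ) • a x) L (𝓝 0) := by
    simpa using hb.sub (ha.const_smul (2 : ℝ))
  have hab : Tendsto (fun x => a x - (2 : ℝ) • b x) L (𝓝 0) := by
    simpa using ha.sub (hb.const_smul (2 : ℝ))
  simpa only [gmul_four_steps hQ] using (((step ha).mul (step hba)).mul (step hab)).mul (step hb)

theorem translationStable_smul_bracket {X : Type*} {L : Filter X} {h c : X → ℝ}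
    (hQ : Q.IsAlt) (hC : HConvex Q C) (hξ : gmul Q P (ξ, 0) ∈ interior C)
    (hh : Tendsto h L (𝓝[≥] 0)) (hc : Tendsto c L (𝓝 0)) (x y : ZS m) :
    TranslationStable Q (𝓝[C] P) L fun q => ((4 * h q) • ξ, (h q ^ 2 * c q) • Q x y) := by
  obtain ⟨a, b, ha, hb, hab⟩ := exists_tendsto_zero_mul_eq (c := fun q => c q / 2)
    (by simpa using hc.div_const 2)
  have hbracket (q : X) :
      (2 * h q ^ 2) • Q (a q • x) (b q • y) = (h q ^ 2 * c q) • Q x y := by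
    simp only [map_smul, LinearMap.smul_apply, smul_smul]
    congr 1
    linear_combination 2 * h q ^ 2 * hab q
  have hax : Tendsto (fun q => a q • x) L (𝓝 0) := by
    simpa only [zero_smul] using ha.smul_const x
  have hby : Tendsto (fun q => b q • y) L (𝓝 0) := by
    simpa only [zero_smul] using hb.smul_const y
  simpa only [hbracket] using translationStable_bracket hQ hC hξ hh hax hby

theorem translationStable_vertical_of_basis {ι : Type*} [Fintype ι] (hQ : Q.IsAlt)
    (hC : HConvex Q C) (hξ : gmul Q P (ξ, 0) ∈ interior C) (B : Module.Basis ι ℝ (TS l))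
    (hB : ∀ i, ∃ x : ZS m × ZS m, Q x.1 x.2 = B i) :
    TranslationStable Q (𝓝[C] P) (𝓝 (0 : TS l) ×ˢ 𝓝[>] (0 : ℝ))
      fun x => ((4 * Fintype.card ι * x.2) • ξ, x.2 ^ 2 • x.1) := by
  have hscale : Tendsto (fun x : TS l × ℝ => x.2) (𝓝 0 ×ˢ 𝓝[>] 0) (𝓝[≥] 0) :=
    tendsto_snd.mono_right (nhdsWithin_mono 0 Ioi_subset_Ici_self)
  have hcoord (i : ι) :
      Tendsto (fun x : TS l × ℝ => B.coord i x.1) (𝓝 0 ×ˢ 𝓝[>] 0) (𝓝 0) := by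
    have := (B.coord i).continuous_of_finiteDimensional.tendsto 0
    rw [map_zero] at this
    exact this.comp tendsto_fst
  have hstable (i : ι) : TranslationStable Q (𝓝[C] P) (𝓝 (0 : TS l) ×ˢ 𝓝[>] (0 : ℝ))
      fun x => ((4 * x.2) • ξ, (x.2 ^ 2 * B.coord i x.1) • B i) := by
    obtain ⟨y, hy⟩ := hB i
    rw [← hy]
    exact translationStable_smul_bracket hQ hC hξ hscale (hcoord i) y.1 y.2
  have hsum (x : TS l × ℝ) :
      ((∑ _i : ι, 4 * x.2) • ξ, ∑ i, (x.2 ^ 2 * B.coord i x.1) • B i) =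
        ((4 * Fintype.card ι * x.2) • ξ, x.2 ^ 2 • x.1) := by
    ext1
    · simp only [Finset.sum_const, Finset.card_univ, nsmul_eq_mul]
      ring_nf
    · simp only [mul_smul, ← Finset.smul_sum, Module.Basis.coord_apply, B.sum_repr]
  simpa only [hsum] using TranslationStable.sum hQ Finset.univ fun i _ => hstable i

theorem exists_translationStable_vertical (hQ : Q.IsAlt)
    (hspan : Submodule.span ℝ (range fun x : ZS m × ZS m => Q x.1 x.2) = ⊤)
    (hC : HConvex Q C) (hξ : gmul Q P (ξ, 0) ∈ interior C) :
    ∃ k : ℝ, 0 ≤ k ∧ TranslationStable Q (𝓝[C] P) (𝓝 (0 : TS l) ×ˢ 𝓝[>] (0 : ℝ))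
      fun x => ((k * x.2) • ξ, x.2 ^ 2 • x.1) := by
  let B := Module.Basis.ofSpan hspan.ge
  have : Fintype _ := @Fintype.ofFinite _ (Module.Finite.finite_basis B)
  exact ⟨_, by positivity, translationStable_vertical_of_basis hQ hC hξ B fun i =>
    Module.Basis.ofSpan_subset hspan.ge (mem_range_self i)⟩

theorem exists_scale_eventually_forall_gmul_mem (hQ : Q.IsAlt)
    (hspan : Submodule.span ℝ (range fun x : ZS m × ZS m => Q x.1 x.2) = ⊤)
    (hC : HConvex Q C) (hξ : gmul Q P (ξ, 0) ∈ interior C) :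
    ∃ k c : ℝ, 0 ≤ k ∧ 0 < c ∧ k * c < 1 ∧
      ∀ᶠ y in 𝓝[C] P ×ˢ 𝓝 (0 : TS l) ×ˢ 𝓝 ξ, ∀ h ∈ Ioc 0 c, ∀ r ∈ Icc (0 : ℝ) 1,
        gmul Q (gmul Q y.1 ((k * h) • ξ, h ^ 2 • y.2.1)) (r • y.2.2, 0) ∈ C := by
  obtain ⟨k, hk, hvert⟩ := exists_translationStable_vertical hQ hspan hC hξ
  have hmem : ∀ᶠ y in (𝓝[C] P ×ˢ 𝓝 (0 : TS l) ×ˢ 𝓝 ξ) ×ˢ 𝓝[>] (0 : ℝ),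
      ∀ r ∈ Icc (0 : ℝ) 1,
        gmul Q (gmul Q y.1.1 ((k * y.2) • ξ, y.2 ^ 2 • y.1.2.1)) (r • y.1.2.2, 0) ∈ C :=
    ((Tendsto.comp hvert (tendsto_fst.fst.prodMk (tendsto_fst.snd.fst.prodMk tendsto_snd))).prodMk
      tendsto_fst.snd.snd).eventually (eventually_forall_gmul_smul_mem hC hξ)
  obtain ⟨near, hnear, small, hsmall, hns⟩ := eventually_prod_iff.mp hmem
  have hk_small : ∀ᶠ h in 𝓝[>] (0 : ℝ), k * h < 1 := by
    refine Tendsto.eventually_lt_const (v := k * 0) (by simp) ?_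
    exact (tendsto_id.const_mul k).mono_left nhdsWithin_le_nhds
  obtain ⟨c, hc, hc_sub⟩ := mem_nhdsGT_iff_exists_Ioc_subset.mp (hsmall.and hk_small)
  exact ⟨k, c, hk, hc, (hc_sub (right_mem_Ioc.mpr hc)).2,
    hnear.mono fun y hy h hh => hns hy (hc_sub hh).1⟩

theorem eventually_forall_gmul_dilation_mem (hQ : Q.IsAlt)
    (hspan : Submodule.span ℝ (range fun x : ZS m × ZS m => Q x.1 x.2) = ⊤)
    (hC : HConvex Q C) (hξ : gmul Q P (ξ, 0) ∈ interior C) :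
    ∀ᶠ x in 𝓝[C] P ×ˢ 𝓝 (0 : ZS m × TS l), ∀ s ∈ Ioc (0 : ℝ) 1,
      gmul Q (gmul Q x.1 (s • ξ, 0)) (s • x.2.1, s ^ 2 • x.2.2) ∈ C := by
  obtain ⟨k, c, hk, hc, hkc, hmem⟩ := exists_scale_eventually_forall_gmul_mem hQ hspan hC hξ
  set d := 1 - k * c with hd
  have hd_pos : 0 < d := sub_pos.mpr hkc
  have hd_le : d ≤ 1 := sub_le_self 1 (by positivity)
  let aim (g : ZS m × TS l) : TS l × ZS m :=
    ((c ^ 2)⁻¹ • (g.2 + d • Q ξ g.1), ξ + d⁻¹ • g.1)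
  have haim : Tendsto aim (𝓝 0) (𝓝 0 ×ˢ 𝓝 ξ) := by
    have hcont : Continuous aim := by
      have := (Q ξ).continuous_of_finiteDimensional
      fun_prop
    simpa [aim, nhds_prod_eq] using hcont.tendsto 0
  filter_upwards [(tendsto_fst.prodMk (haim.comp tendsto_snd)).eventually hmem] with x hx s hs
  have hcs : c * s ∈ Ioc 0 c := ⟨by have := hs.1; positivity, mul_le_of_le_one_right hc.le hs.2⟩
  have hds : d * s ∈ Icc 0 1 := ⟨by have := hs.1; positivity, mul_le_one₀ hd_le hs.1.le hs.2⟩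
  have hvert : (c * s) ^ 2 • (aim x.2).1 = s ^ 2 • (x.2.2 + d • Q ξ x.2.1) := by
    rw [smul_smul]
    congr 1
    field_simp
  have hhor : k * (c * s) = (1 - d) * s := by rw [hd]; ring
  have := hx (c * s) hcs (d * s) hds
  rwa [Function.comp_apply, hvert, hhor, gmul_assoc, gmul_smul_add_inv_smul hQ hd_pos.ne',
    ← gmul_assoc] at this

theorem exists_forall_gmul_homogeneousBox_mem (hQ : Q.IsAlt)
    (hspan : Submodule.span ℝ (range fun x : ZS m × ZS m => Q x.1 x.2) = ⊤)
    (hC : HConvex Q C) (hξ : gmul Q P (ξ, 0) ∈ interior C) :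
    ∃ ε > 0, ∀ p ∈ C ∩ Metric.ball P ε, ∀ s ∈ Ioc (0 : ℝ) 1, ∀ g ∈ homogeneousBox m l (ε * s),
      gmul Q (gmul Q p (s • ξ, 0)) g ∈ C := by
  obtain ⟨near, hnear, small, hsmall, hmem⟩ :=
    eventually_prod_iff.mp (eventually_forall_gmul_dilation_mem hQ hspan hC hξ)
  obtain ⟨δ, hδ, hδ_near⟩ := Metric.mem_nhdsWithin_iff.mp hnear
  obtain ⟨η, hη, hη_small⟩ := Metric.mem_nhds_iff.mp hsmall
  obtain ⟨ε, hε, hε_lt⟩ := exists_between (lt_min (lt_min hδ hη) zero_lt_one)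
  simp only [lt_min_iff] at hε_lt
  obtain ⟨⟨hεδ, hεη⟩, hε1⟩ := hε_lt
  refine ⟨ε, hε, fun p hp s hs g hg => ?_⟩
  have hg_small : small (s⁻¹ • g.1, (s ^ 2)⁻¹ • g.2) :=
    hη_small <| Metric.ball_subset_ball hεη.le <|
      homogeneousBox_subset_ball hε1.le (dilation_inv_mem_homogeneousBox hs.1 hg)
  have hp_near : near p := hδ_near ⟨Metric.ball_subset_ball hεδ.le hp.2, hp.1⟩
  simpa only [smul_inv_smul₀ hs.1.ne', smul_inv_smul₀ (pow_ne_zero 2 hs.1.ne')] using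
    hmem hp_near hg_small s hs

end StepTwoGroup

/-- **Inner cone property for convex sets in two-step Carnot groups (box form).** -/
theorem inner_cone_property_box
    (m l : ℕ) (hm : 0 < m) (hl : 0 < l)
    (Q : ZS m →ₗ[ℝ] ZS m →ₗ[ℝ] TS l)
    (hskew : ∀ z ζ : ZS m, Q z ζ = - Q ζ z)
    (hHorm : Submodule.span ℝ (Set.range fun zz : ZS m × ZS m => Q zz.1 zz.2) = ⊤)
    (C : Set (ZS m × TS l)) (hC : HConvex Q C)
    (z : ZS m) (t : TS l) (hP : (z, t) ∈ closure C)
    (ξ : ZS m) (hQint : gmul Q (z, t) (ξ, 0) ∈ interior C) :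
    ∃ ε > (0 : ℝ), ∀ z' : ZS m, ∀ t' : TS l, (z', t') ∈ closure C →
      Real.sqrt (‖z' - z‖ ^ 2 + ‖t' - t‖ ^ 2) < ε →
      ∀ s : ℝ, 0 < s → s ≤ 1 →
      ∀ w : ZS m, ∀ τ : TS l, ‖w‖ < ε * s → ‖τ‖ < ε ^ 2 * s ^ 2 →
        gmul Q (gmul Q (z', t') (s • ξ, 0)) (w, τ) ∈ C := by
  have : IsAddTorsionFree (TS l) := .of_isTorsionFree ℝ _
  have hQ : Q.IsAlt := fun x => self_eq_neg.mp (hskew x x)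
  obtain ⟨ε, hε, hcone⟩ := exists_forall_gmul_homogeneousBox_mem hQ hHorm hC hQint
  refine ⟨ε, hε, fun z' t' hcl hdist s hs hs1 w τ hw hτ => ?_⟩
  have hball : Metric.ball (z, t) ε ∈ 𝓝 (z', t') :=
    Metric.isOpen_ball.mem_nhds ((dist_le_sqrt_norm_sq_add_norm_sq _ _).trans_lt hdist)
  have hbox : homogeneousBox m l (ε * s) ∈ 𝓝 (w, τ) :=
    (isOpen_homogeneousBox _).mem_nhds ⟨hw, by rwa [mul_pow]⟩
  obtain ⟨p, hp, g, hg, hpg⟩ := exists_gmul_eq_of_mem_closure hQ (s • ξ, 0) hcl hball hbox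
  exact hpg ▸ hcone p hp s ⟨hs, hs1⟩ g hg
end
end

section
/- Let C ⊆ G be horizontally convex and assume the Hörmander condition. Let P = (z,t) belong to the closure of C and suppose there is ξ ∈ Z such that (z,t)·(ξ,0) ∈ Int(C). Then the whole segment of points (z,t)·(sξ,0) with s ∈ (0,1] is contained in Int(C). -/
/- Step-two Carnot group `G = Z × T` with `Z = ℝ^m`, `T = ℝ^ℓ` and group law
`(z,t)·(ζ,τ) = (z+ζ, t+τ+Q(z,ζ))` for a bilinear skew-symmetric `Q`. -/

noncomputable section

/-!
Let `R ∈ C` be close to `P`. A horizontal step from `R` by a vector close to `cξ`, `0 < c ≤ 1`,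
stays in `C`, because prolonging it by the factor `1/c` leads close to the interior point `P·(ξ,0)`.
The same holds for a chain of such steps of total length at most one, since it keeps following the
segment from `P` to `P·(ξ,0)`. Perturbing four consecutive equal steps along `ξ` by `a`, `b - 2a`,
`a - 2b`, `b` does not alter the horizontal displacement and cancels all terms `Q(ξ,·)`, leaving
the vertical displacement `2Q(a,b)`. By the Hörmander condition the endpoints of chains of total
length `s` therefore fill a neighbourhood of `R·(sξ,0)`. As `R → P` this neighbourhood does not
shrink, so for some `R` it contains a neighbourhood of `P·(sξ,0)`.
-/

open Filter Topology

section Algebra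

variable {Z T : Type*} [AddCommGroup Z] [Module ℝ Z] [AddCommGroup T] [Module ℝ T]

/-- The group law of the step-two group on `Z × T` for arbitrary real vector spaces `Z` and `T`;
it unfolds to `gmul` on Euclidean spaces. -/
def stepTwoMul (Q : Z →ₗ[ℝ] Z →ₗ[ℝ] T) (p q : Z × T) : Z × T :=
  (p.1 + q.1, p.2 + q.2 + Q p.1 q.1)

/-- Horizontal convexity of a subset of the step-two group on `Z × T`;
it unfolds to `HConvex` on Euclidean spaces. -/
def HorizontallyConvex (Q : Z →ₗ[ℝ] Z →ₗ[ℝ] T) (C : Set (Z × T)) : Prop :=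
  ∀ p : Z × T, ∀ u : Z, p ∈ C → stepTwoMul Q p (u, 0) ∈ C →
    ∀ s : ℝ, 0 ≤ s → s ≤ 1 → stepTwoMul Q p (s • u, 0) ∈ C

variable {Q : Z →ₗ[ℝ] Z →ₗ[ℝ] T}

theorem isAlt_of_forall_eq_neg (hskew : ∀ z ζ : Z, Q z ζ = -Q ζ z) : Q.IsAlt := by
  have : IsAddTorsionFree T := .of_isTorsionFree ℝ T
  exact fun z => self_eq_neg.mp (hskew z z)

theorem stepTwoMul_assoc (p q r : Z × T) :
    stepTwoMul Q (stepTwoMul Q p q) r = stepTwoMul Q p (stepTwoMul Q q r) := by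
  ext1
  · simp only [stepTwoMul]; module
  · simp only [stepTwoMul, map_add, LinearMap.add_apply]; module

theorem stepTwoMul_neg_cancel_left (hAlt : Q.IsAlt) (p q : Z × T) :
    stepTwoMul Q p (stepTwoMul Q (-p) q) = q := by
  ext1
  · simp [stepTwoMul]
  · simp only [stepTwoMul, Prod.fst_neg, Prod.snd_neg, map_add, map_neg, LinearMap.neg_apply,
      hAlt.self_eq_zero]
    module

theorem neg_stepTwoMul_cancel_left (hAlt : Q.IsAlt) (p q : Z × T) :
    stepTwoMul Q (-p) (stepTwoMul Q p q) = q := by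
  simpa only [neg_neg] using stepTwoMul_neg_cancel_left hAlt (-p) q

theorem stepTwoMul_smul_smul (hAlt : Q.IsAlt) (ξ : Z) (c d : ℝ) (v w : T) :
    stepTwoMul Q (c • ξ, v) (d • ξ, w) = ((c + d) • ξ, v + w) := by
  simp [stepTwoMul, hAlt ξ, add_smul]

theorem stepTwoMul_four_perturbed_steps (hAlt : Q.IsAlt) (w a b : Z) :
    stepTwoMul Q (stepTwoMul Q (w + a, 0) (w + (b - (2 : ℝ) • a), 0))
      (stepTwoMul Q (w + (a - (2 : ℝ) • b), 0) (w + b, 0)) =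
      ((4 : ℝ) • w, (2 : ℝ) • Q a b) := by
  ext1
  · simp only [stepTwoMul]; module
  · simp only [stepTwoMul, map_add, map_sub, map_smul, LinearMap.add_apply, LinearMap.sub_apply,
      LinearMap.smul_apply, hAlt.self_eq_zero, ← hAlt.neg w a, ← hAlt.neg w b, ← hAlt.neg a b]
    module

end Algebra

theorem exists_tendsto_zero_mul_eq_s1 {X : Type*} {l : Filter X} {r : X → ℝ}
    (hr : Tendsto r l (𝓝 0)) :
    ∃ α β : X → ℝ, Tendsto α l (𝓝 0) ∧ Tendsto β l (𝓝 0) ∧ ∀ x, α x * β x = r x := by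
  -- `√` vanishes on negative reals, so these are the roots of the positive and negative parts.
  have hpos : Tendsto (fun x => √(r x)) l (𝓝 0) := by simpa using hr.sqrt
  have hneg : Tendsto (fun x => √(-r x)) l (𝓝 0) := by simpa using hr.neg.sqrt
  refine ⟨fun x => √(r x) + √(-r x), fun x => √(r x) - √(-r x),
    by simpa using hpos.add hneg, by simpa using hpos.sub hneg, fun x => ?_⟩
  calc (√(r x) + √(-r x)) * (√(r x) - √(-r x)) = √(r x) ^ 2 - √(-r x) ^ 2 := by ring
    _ = max (r x) 0 - max (-r x) 0 := by rw [Real.sq_sqrt', Real.sq_sqrt']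
    _ = r x := max_zero_sub_eq_self (r x)

section Chain

variable {Z T X : Type*} [AddCommGroup Z] [Module ℝ Z] [TopologicalSpace Z]
  [AddCommGroup T] [Module ℝ T]

/-- `HorizontalChain Q ξ l c f` says that `f x` is a product of finitely many horizontal elements
`(u x, 0)`, the `i`-th of which tends to `(cᵢ • ξ, 0)` along `l`, where each `cᵢ` is positive and
`∑ cᵢ = c`. The family is indexed by `x` so that the steps can be chosen as functions of the
endpoint they have to reach. -/
inductive HorizontalChain (Q : Z →ₗ[ℝ] Z →ₗ[ℝ] T) (ξ : Z) (l : Filter X) :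
    ℝ → (X → Z × T) → Prop
  | step {c : ℝ} {u : X → Z} (hc : 0 < c) (hu : Tendsto u l (𝓝 (c • ξ))) :
      HorizontalChain Q ξ l c fun x => (u x, 0)
  | mul {c d : ℝ} {f g : X → Z × T} (hf : HorizontalChain Q ξ l c f)
      (hg : HorizontalChain Q ξ l d g) :
      HorizontalChain Q ξ l (c + d) fun x => stepTwoMul Q (f x) (g x)

namespace HorizontalChain

variable {Q : Z →ₗ[ℝ] Z →ₗ[ℝ] T} {ξ : Z} {l : Filter X} {c d : ℝ}

theorem pos {f : X → Z × T} (hf : HorizontalChain Q ξ l c f) : 0 < c := by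
  induction hf with
  | step hc _ => exact hc
  | mul _ _ hc hd => exact add_pos hc hd

theorem vertical_add (hAlt : Q.IsAlt) {v w : X → T}
    (hv : HorizontalChain Q ξ l c fun x => (c • ξ, v x))
    (hw : HorizontalChain Q ξ l d fun x => (d • ξ, w x)) :
    HorizontalChain Q ξ l (c + d) fun x => ((c + d) • ξ, v x + w x) := by
  simpa only [stepTwoMul_smul_smul hAlt] using hv.mul hw

theorem vertical_sum (hAlt : Q.IsAlt) {ι : Type*} (s : Finset ι) {v : ι → X → T}
    (hv : ∀ i ∈ s, ∀ c : ℝ, 0 < c → HorizontalChain Q ξ l c fun x => (c • ξ, v i x))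
    (hc : 0 < c) : HorizontalChain Q ξ l c fun x => (c • ξ, ∑ i ∈ s, v i x) := by
  classical
  induction s using Finset.induction_on generalizing c with
  | empty => simpa only [Finset.sum_empty] using step hc tendsto_const_nhds
  | insert i s hi ih =>
    have head := hv i (Finset.mem_insert_self i s) (c / 2) (half_pos hc)
    have tail := ih (fun j hj => hv j (Finset.mem_insert_of_mem hj)) (half_pos hc)
    simpa only [Finset.sum_insert hi, add_halves] using vertical_add hAlt head tail

theorem step_add [ContinuousAdd Z] {a : X → Z} (hc : 0 < c) (ha : Tendsto a l (𝓝 0)) :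
    HorizontalChain Q ξ l c fun x => (c • ξ + a x, 0) :=
  step hc (by simpa only [add_zero] using ha.const_add (c • ξ))

variable [IsTopologicalAddGroup Z] [ContinuousSMul ℝ Z]

theorem vertical_commutator (hAlt : Q.IsAlt) {a b : X → Z} (ha : Tendsto a l (𝓝 0))
    (hb : Tendsto b l (𝓝 0)) (hc : 0 < c) :
    HorizontalChain Q ξ l c fun x => (c • ξ, (2 : ℝ) • Q (a x) (b x)) := by
  have hc4 : 0 < c / 4 := by positivity
  have hba : Tendsto (fun x => b x - (2 : ℝ) • a x) l (𝓝 0) := by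
    simpa using hb.sub (ha.const_smul (2 : ℝ))
  have hab : Tendsto (fun x => a x - (2 : ℝ) • b x) l (𝓝 0) := by
    simpa using ha.sub (hb.const_smul (2 : ℝ))
  have four_steps := ((step_add (Q := Q) (ξ := ξ) hc4 ha).mul (step_add hc4 hba)).mul
    ((step_add hc4 hab).mul (step_add hc4 hb))
  simp only [stepTwoMul_four_perturbed_steps hAlt, smul_smul] at four_steps
  convert four_steps using 3 <;> ring_nf

theorem vertical_smul (hAlt : Q.IsAlt) {r : X → ℝ} (hr : Tendsto r l (𝓝 0)) (x₀ y₀ : Z)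
    (hc : 0 < c) : HorizontalChain Q ξ l c fun x => (c • ξ, r x • Q x₀ y₀) := by
  obtain ⟨α, β, hα, hβ, hαβ⟩ := exists_tendsto_zero_mul_eq_s1 (r := fun x => r x / 2)
    (by simpa using hr.div_const 2)
  have ha : Tendsto (fun x => α x • x₀) l (𝓝 0) := by simpa using hα.smul_const x₀
  have hb : Tendsto (fun x => β x • y₀) l (𝓝 0) := by simpa using hβ.smul_const y₀
  convert vertical_commutator hAlt ha hb hc using 3 with x
  rw [map_smul, map_smul, LinearMap.smul_apply, smul_smul, smul_smul]
  congr 1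
  linear_combination (-2 : ℝ) * hαβ x

variable [TopologicalSpace T] [IsTopologicalAddGroup T] [ContinuousSMul ℝ T] [T2Space T]
  [FiniteDimensional ℝ T]

theorem vertical_of_span_eq_top (hAlt : Q.IsAlt)
    (hSpan : Submodule.span ℝ (Set.range fun zz : Z × Z => Q zz.1 zz.2) = ⊤)
    {v : X → T} (hv : Tendsto v l (𝓝 0)) (hc : 0 < c) :
    HorizontalChain Q ξ l c fun x => (c • ξ, v x) := by
  let b := Module.Basis.ofSpan hSpan.ge
  have : Fintype _ := FiniteDimensional.fintypeBasisIndex b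
  have hcoord (i) : Tendsto (fun x => b.repr (v x) i) l (𝓝 0) := by
    have hcont := (b.coord i).continuous_of_finiteDimensional.tendsto 0
    rw [map_zero] at hcont
    exact hcont.comp hv
  have hterm (i) (c : ℝ) (hc : 0 < c) :
      HorizontalChain Q ξ l c fun x => (c • ξ, b.repr (v x) i • b i) := by
    obtain ⟨⟨x₀, y₀⟩, hb⟩ := Module.Basis.ofSpan_subset hSpan.ge (Set.mem_range_self i)
    simp only [b, ← hb]
    exact vertical_smul hAlt (hcoord i) x₀ y₀ hc
  simpa only [b.sum_repr] using vertical_sum hAlt Finset.univ (fun i _ => hterm i) hc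

theorem of_tendsto (hAlt : Q.IsAlt)
    (hSpan : Submodule.span ℝ (Set.range fun zz : Z × Z => Q zz.1 zz.2) = ⊤)
    (hξ : Continuous (Q ξ)) {f : X → Z × T} (hf : Tendsto f l (𝓝 (c • ξ, 0))) (hc : 0 < c) :
    HorizontalChain Q ξ l c f := by
  have hf₁ : Tendsto (fun x => (f x).1) l (𝓝 (c • ξ)) := hf.fst_nhds
  have hf₂ : Tendsto (fun x => (f x).2) l (𝓝 0) := hf.snd_nhds
  have hu : Tendsto (fun x => (f x).1 - (c / 2) • ξ) l (𝓝 ((c / 2) • ξ)) := by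
    convert hf₁.sub_const ((c / 2) • ξ) using 2
    module
  have hv : Tendsto (fun x => (f x).2 - (c / 2) • Q ξ (f x).1) l (𝓝 0) := by
    have hQ : Tendsto (fun x => Q ξ (f x).1) l (𝓝 0) := by
      simpa [hAlt.self_eq_zero, Function.comp_def] using (hξ.tendsto (c • ξ)).comp hf₁
    simpa using hf₂.sub (hQ.const_smul (c / 2))
  convert (vertical_of_span_eq_top hAlt hSpan hv (half_pos hc)).mul (step (half_pos hc) hu)
    using 1
  · ring
  · ext1 x
    ext1
    · simp [stepTwoMul]
    · simp [stepTwoMul, hAlt.self_eq_zero]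

end HorizontalChain

end Chain

section Convexity

variable {Z T X : Type*} [AddCommGroup Z] [Module ℝ Z] [TopologicalSpace Z] [ContinuousAdd Z]
  [AddCommGroup T] [Module ℝ T] [TopologicalSpace T] [ContinuousAdd T]
  {Q : Z →ₗ[ℝ] Z →ₗ[ℝ] T}

theorem continuous_stepTwoMul (hQ : Continuous fun zz : Z × Z => Q zz.1 zz.2) :
    Continuous fun pq : (Z × T) × (Z × T) => stepTwoMul Q pq.1 pq.2 := by
  have hQfst : Continuous fun pq : (Z × T) × (Z × T) => Q pq.1.1 pq.2.1 :=
    hQ.comp (continuous_fst.fst.prodMk continuous_snd.fst)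
  exact (continuous_fst.fst.add continuous_snd.fst).prodMk
    ((continuous_fst.snd.add continuous_snd.snd).add hQfst)

theorem tendsto_stepTwoMul (hQ : Continuous fun zz : Z × Z => Q zz.1 zz.2)
    {l : Filter X} {f g : X → Z × T} {p q : Z × T} (hf : Tendsto f l (𝓝 p))
    (hg : Tendsto g l (𝓝 q)) :
    Tendsto (fun x => stepTwoMul Q (f x) (g x)) l (𝓝 (stepTwoMul Q p q)) :=
  ((continuous_stepTwoMul hQ).tendsto (p, q)).comp (hf.prodMk_nhds hg)

theorem HorizontalChain.tendsto (hQ : Continuous fun zz : Z × Z => Q zz.1 zz.2) (hAlt : Q.IsAlt)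
    {ξ : Z} {l : Filter X} {c : ℝ} {f : X → Z × T} (hf : HorizontalChain Q ξ l c f) :
    Tendsto f l (𝓝 (c • ξ, 0)) := by
  induction hf with
  | step _ hu => exact hu.prodMk_nhds tendsto_const_nhds
  | mul _ _ hf hg =>
    simpa only [stepTwoMul_smul_smul hAlt, add_zero] using tendsto_stepTwoMul hQ hf hg

namespace HorizontallyConvex

variable [ContinuousConstSMul ℝ Z] {C : Set (Z × T)} {p : Z × T}

theorem eventually_step_mem (hC : HorizontallyConvex Q C)
    (hQ : Continuous fun zz : Z × Z => Q zz.1 zz.2) {v : Z} {s : ℝ} (hs₀ : 0 < s) (hs₁ : s ≤ 1)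
    (hv : stepTwoMul Q p (v, 0) ∈ interior C) :
    ∀ᶠ q in 𝓝 p ×ˢ 𝓝 (s • v), q.1 ∈ C → stepTwoMul Q q.1 (q.2, 0) ∈ C := by
  have prolonged : Tendsto (fun q : (Z × T) × Z => stepTwoMul Q q.1 (s⁻¹ • q.2, 0))
      (𝓝 p ×ˢ 𝓝 (s • v)) (𝓝 (stepTwoMul Q p (v, 0))) := by
    refine tendsto_stepTwoMul hQ tendsto_fst (Tendsto.prodMk_nhds ?_ tendsto_const_nhds)
    simpa only [inv_smul_smul₀ hs₀.ne'] using
      (tendsto_snd (f := 𝓝 p) (g := 𝓝 (s • v))).const_smul s⁻¹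
  filter_upwards [prolonged (mem_interior_iff_mem_nhds.mp hv)] with q hend hstart
  simpa only [smul_inv_smul₀ hs₀.ne'] using hC q.1 _ hstart hend s hs₀.le hs₁

theorem eventually_chain_mem (hC : HorizontallyConvex Q C)
    (hQ : Continuous fun zz : Z × Z => Q zz.1 zz.2) (hAlt : Q.IsAlt) {ξ : Z} {l : Filter X}
    {c L : ℝ} {f : X → Z × T} (hf : HorizontalChain Q ξ l c f) (hcL : c ≤ L)
    (hL : stepTwoMul Q p (L • ξ, 0) ∈ interior C) :
    ∀ᶠ q in 𝓝 p ×ˢ l, q.1 ∈ C → stepTwoMul Q q.1 (f q.2) ∈ C := by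
  induction hf generalizing p L with
  | @step c u hc hu =>
    have hLpos : 0 < L := hc.trans_le hcL
    have near := hC.eventually_step_mem hQ (div_pos hc hLpos) ((div_le_one hLpos).mpr hcL) hL
    rw [smul_smul, div_mul_cancel₀ c hLpos.ne'] at near
    exact (tendsto_id.prodMap hu).eventually near
  | @mul c d f g hf hg ihf ihg =>
    have hfirst := ihf (by linarith [hg.pos]) hL
    have hmid : stepTwoMul Q (stepTwoMul Q p (c • ξ, 0)) ((L - c) • ξ, 0) ∈ interior C := by
      rwa [stepTwoMul_assoc, stepTwoMul_smul_smul hAlt, add_sub_cancel, add_zero]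
    have advance : Tendsto (fun q : (Z × T) × X => (stepTwoMul Q q.1 (f q.2), q.2)) (𝓝 p ×ˢ l)
        (𝓝 (stepTwoMul Q p (c • ξ, 0)) ×ˢ l) :=
      (tendsto_stepTwoMul hQ tendsto_fst ((hf.tendsto hQ hAlt).comp tendsto_snd)).prodMk tendsto_snd
    have hsecond := advance.eventually (ihg (by linarith) hmid)
    filter_upwards [hfirst, hsecond] with q hq₁ hq₂ hq
    simpa only [stepTwoMul_assoc] using hq₂ (hq₁ hq)

end HorizontallyConvex

theorem mem_interior_of_eventually_stepTwoMul_mem [ContinuousNeg Z] [ContinuousNeg T]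
    (hQ : Continuous fun zz : Z × Z => Q zz.1 zz.2) (hAlt : Q.IsAlt) {C : Set (Z × T)}
    {p w : Z × T} (hp : p ∈ closure C)
    (hC : ∀ᶠ q in 𝓝 p ×ˢ 𝓝 w, q.1 ∈ C → stepTwoMul Q q.1 q.2 ∈ C) :
    stepTwoMul Q p w ∈ interior C := by
  have displacement : Tendsto (fun q : (Z × T) × (Z × T) => (q.1, stepTwoMul Q (-q.1) q.2))
      (𝓝 p ×ˢ 𝓝 (stepTwoMul Q p w)) (𝓝 p ×ˢ 𝓝 w) := by
    refine tendsto_fst.prodMk ?_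
    simpa only [neg_stepTwoMul_cancel_left hAlt] using
      tendsto_stepTwoMul hQ (tendsto_fst (f := 𝓝 p) (g := 𝓝 (stepTwoMul Q p w))).neg tendsto_snd
  have hpairs : ∀ᶠ q in 𝓝 p ×ˢ 𝓝 (stepTwoMul Q p w), q.1 ∈ C → q.2 ∈ C := by
    simpa only [stepTwoMul_neg_cancel_left hAlt] using displacement.eventually hC
  obtain ⟨R, hR, hnear⟩ :=
    ((mem_closure_iff_frequently.mp hp).and_eventually hpairs.curry).exists
  exact mem_interior_iff_mem_nhds.mpr (hnear.mono fun _ hq => hq hR)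

end Convexity

theorem segment_in_interior_general {Z T : Type*}
    [AddCommGroup Z] [Module ℝ Z] [TopologicalSpace Z] [IsTopologicalAddGroup Z]
    [ContinuousSMul ℝ Z] [AddCommGroup T] [Module ℝ T] [TopologicalSpace T]
    [IsTopologicalAddGroup T] [ContinuousSMul ℝ T] [T2Space T] [FiniteDimensional ℝ T]
    {Q : Z →ₗ[ℝ] Z →ₗ[ℝ] T} (hQ : Continuous fun zz : Z × Z => Q zz.1 zz.2) (hAlt : Q.IsAlt)
    (hSpan : Submodule.span ℝ (Set.range fun zz : Z × Z => Q zz.1 zz.2) = ⊤)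
    {C : Set (Z × T)} (hC : HorizontallyConvex Q C) {p : Z × T} (hp : p ∈ closure C)
    {ξ : Z} (hξ : stepTwoMul Q p (ξ, 0) ∈ interior C) {s : ℝ} (hs₀ : 0 < s) (hs₁ : s ≤ 1) :
    stepTwoMul Q p (s • ξ, 0) ∈ interior C := by
  have hchain : HorizontalChain Q ξ (𝓝 (s • ξ, 0)) s id :=
    .of_tendsto hAlt hSpan (hQ.comp (Continuous.prodMk_right ξ)) tendsto_id hs₀
  exact mem_interior_of_eventually_stepTwoMul_mem hQ hAlt hp
    (hC.eventually_chain_mem hQ hAlt hchain hs₁ (by rwa [one_smul]))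

/-- If `(z,t)` lies in the closure of the convex set `C` and `(z,t)·(ξ,0) ∈ Int(C)`,
then the open segment `(z,t)·(sξ,0)`, `s ∈ (0,1]`, is contained in `Int(C)`. -/
theorem segment_in_interior
    (m l : ℕ) (hm : 0 < m) (hl : 0 < l)
    (Q : ZS m →ₗ[ℝ] ZS m →ₗ[ℝ] TS l)
    (hskew : ∀ z ζ : ZS m, Q z ζ = - Q ζ z)
    (hHorm : Submodule.span ℝ (Set.range fun zz : ZS m × ZS m => Q zz.1 zz.2) = ⊤)
    (C : Set (ZS m × TS l)) (hC : HConvex Q C)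
    (z : ZS m) (t : TS l) (hP : (z, t) ∈ closure C)
    (ξ : ZS m) (hQint : gmul Q (z, t) (ξ, 0) ∈ interior C) :
    ∀ s : ℝ, 0 < s → s ≤ 1 → gmul Q (z, t) (s • ξ, 0) ∈ interior C := fun _ =>
  segment_in_interior_general Q.toContinuousBilinearMap.continuous₂
    (isAlt_of_forall_eq_neg hskew) hHorm hC hP hQint
end
end

section
/- Let E ⊆ ℝ⁴ = ℍ×ℝ be precisely monotone with E ≠ ∅ and E ≠ ℝ⁴. Then there exists an affine hyperplane Σ = {v ∈ ℝ⁴ : ⟨v,ν⟩ = c} (for some nonzero ν ∈ ℝ⁴ and some c ∈ ℝ) such that Int(E) and Int(ℝ⁴∖E) are precisely the two connected components {v : ⟨v,ν⟩ > c} and {v : ⟨v,ν⟩ < c} of ℝ⁴∖Σ (in some order). -/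
/- The group `ℍ×ℝ`: `ℝ⁴` with coordinates `(x,y,u,t)` and law
`(x,y,u,t)·(x',y',u',t') = (x+x', y+y', u+u', t+t'+2(yx'−y'x))`. -/

noncomputable section

/-- Group law of `ℍ×ℝ` on `ℝ⁴`. -/
def hmul (p q : Fin 4 → ℝ) : Fin 4 → ℝ :=
  ![p 0 + q 0, p 1 + q 1, p 2 + q 2, p 3 + q 3 + 2 * (p 1 * q 0 - q 1 * p 0)]

/-- Horizontal convexity in `ℍ×ℝ`. -/
def HRConvex (C : Set (Fin 4 → ℝ)) : Prop :=
  ∀ p ∈ C, ∀ a b c : ℝ, hmul p ![a, b, c, 0] ∈ C →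
    ∀ s : ℝ, 0 ≤ s → s ≤ 1 → hmul p ![s * a, s * b, s * c, 0] ∈ C

/-- Precise monotonicity in `ℍ×ℝ`. -/
def PreciselyMonotone (E : Set (Fin 4 → ℝ)) : Prop := HRConvex E ∧ HRConvex Eᶜ

/-!
Split `ℍ × ℝ` as a product and let `A`, `B ⊆ ℍ` consist of the base points whose vertical line
ends up in `E` upwards, respectively downwards. The set `A \ B` contains every line through two of
its aligned points, so if it has interior it is all of `ℍ`; then `E` is, up to its boundary, the
epigraph of a function which is affine along horizontal lines, and such functions are affine. The
same applies to `B \ A` and the complement of `E`. If neither difference has interior, `E` is, up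
to its boundary, the cylinder over `A`, which is a precisely monotone subset of `ℍ`.

For precisely monotone `A ⊆ ℍ`, the frontier contains a horizontal line through each of its points
and, with two aligned points, the line through them. If it contained two lines with distinct
parallel projections, it would contain the quadric they rule and then all of `ℍ`; hence it lies in
a plane, whose two sides are separated by `A`.
-/

open Set Filter Topology
open AffineMap (lineMap)

section Alignment

variable {V W : Type*} [AddCommGroup V] [Module ℝ V] [AddCommGroup W] [Module ℝ W]
  {R : V → V → Prop} {R' : W → W → Prop}

/-- The relation that some line of a distinguished family contains both points: with `p` and `q`,
any two points of the line through them are again related. -/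
structure IsAlignment (R : V → V → Prop) : Prop where
  refl (p : V) : R p p
  lineMap {p q : V} (h : R p q) (s t : ℝ) : R (lineMap p q s) (lineMap p q t)

/-- Convexity tested only on pairs of aligned points. -/
def ConvexAlong (R : V → V → Prop) (C : Set V) : Prop :=
  ∀ ⦃p⦄, p ∈ C → ∀ ⦃q⦄, q ∈ C → R p q → segment ℝ p q ⊆ C

/-- Precise monotonicity with respect to an alignment relation. -/
def MonotoneAlong (R : V → V → Prop) (E : Set V) : Prop :=
  ConvexAlong R E ∧ ConvexAlong R Eᶜ

/-- With two aligned points, the set contains the whole line through them. -/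
def FlatAlong (R : V → V → Prop) (B : Set V) : Prop :=
  ∀ ⦃p⦄, p ∈ B → ∀ ⦃q⦄, q ∈ B → R p q → ∀ s : ℝ, lineMap p q s ∈ B

/-- The function is affine on every line through two aligned points. -/
def AffineAlong (R : V → V → Prop) (f : V → ℝ) : Prop :=
  ∀ ⦃p q⦄, R p q → ∀ s : ℝ, f (lineMap p q s) = lineMap (f p) (f q) s

theorem lineMap_lineMap_inv (p q : V) {s : ℝ} (hs : s ≠ 0) :
    lineMap p (lineMap p q s) s⁻¹ = q := by
  rw [AffineMap.lineMap_lineMap_right, inv_mul_cancel₀ hs, AffineMap.lineMap_apply_one]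

namespace IsAlignment

variable (hR : IsAlignment R)
include hR

theorem symm {p q : V} (h : R p q) : R q p := by
  simpa using hR.lineMap h 1 0

theorem lineMap_right {p q : V} (h : R p q) (s : ℝ) : R p (AffineMap.lineMap p q s) := by
  simpa using hR.lineMap h 0 s

theorem invImage_fst {T : Type*} [AddCommGroup T] [Module ℝ T] :
    IsAlignment (InvImage R (Prod.fst : V × T → V)) where
  refl p := hR.refl p.1
  lineMap h s t := by
    simpa only [InvImage, AffineMap.fst_lineMap] using hR.lineMap h s t

end IsAlignment

theorem MonotoneAlong.compl {E : Set V} (hE : MonotoneAlong R E) : MonotoneAlong R Eᶜ :=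
  ⟨hE.2, by rw [compl_compl]; exact hE.1⟩

theorem ConvexAlong.inter {C D : Set V} (hC : ConvexAlong R C) (hD : ConvexAlong R D) :
    ConvexAlong R (C ∩ D) :=
  fun _ hp _ hq h => subset_inter (hC hp.1 hq.1 h) (hD hp.2 hq.2 h)

section Preimage

variable {f : W →ᵃ[ℝ] V} (hf : ∀ p q, R' p q → R (f p) (f q))
include hf

theorem ConvexAlong.preimage {C : Set V} (hC : ConvexAlong R C) : ConvexAlong R' (f ⁻¹' C) := by
  intro p hp q hq h
  rw [← image_subset_iff, image_segment]
  exact hC hp hq (hf p q h)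

theorem FlatAlong.preimage {B : Set V} (hB : FlatAlong R B) : FlatAlong R' (f ⁻¹' B) := by
  intro p hp q hq h s
  rw [mem_preimage, AffineMap.apply_lineMap]
  exact hB hp hq (hf p q h) s

end Preimage

theorem ConvexAlong.lineMap_mem {C : Set V} (hC : ConvexAlong R C) {p q : V} (hp : p ∈ C)
    (hq : q ∈ C) (h : R p q) {s : ℝ} (hs : s ∈ Icc (0 : ℝ) 1) : lineMap p q s ∈ C :=
  hC hp hq h (segment_eq_image_lineMap ℝ p q ▸ mem_image_of_mem _ hs)

theorem ConvexAlong.ordConnected {C : Set V} (hR : IsAlignment R) (hC : ConvexAlong R C)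
    {p q : V} (h : R p q) : OrdConnected (lineMap p q ⁻¹' C : Set ℝ) := by
  refine ordConnected_iff.2 fun s hs t ht hst => ?_
  rw [← segment_eq_Icc hst, ← image_subset_iff, image_segment]
  exact hC hs ht (hR.lineMap h s t)

theorem ConvexAlong.mem_of_segment_inter_nonempty {C : Set V} (hR : IsAlignment R)
    (hC : ConvexAlong R C) {c m : V} (h : R c m) {k : ℝ} (hk : 0 ≤ k) (hm : m ∈ C)
    (hmeet : (segment ℝ (lineMap c m (-k)) c ∩ C).Nonempty) : c ∈ C := by
  obtain ⟨z, hz, hzC⟩ := hmeet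
  have hsegment : segment ℝ (lineMap c m (-k)) c = lineMap c m '' Icc (-k) 0 := by
    rw [← segment_eq_Icc (by linarith : -k ≤ 0), image_segment, AffineMap.lineMap_apply_zero]
  obtain ⟨s, hs, rfl⟩ := hsegment ▸ hz
  have hone : (1 : ℝ) ∈ (lineMap c m ⁻¹' C : Set ℝ) := by simpa using hm
  simpa using (hC.ordConnected hR h).out hzC hone ⟨hs.2, zero_le_one⟩

theorem FlatAlong.of_forall_one_lt {B : Set V} (hR : IsAlignment R) (hconv : ConvexAlong R B)
    (hext : ∀ p ∈ B, ∀ q ∈ B, R p q → ∀ s : ℝ, 1 < s → lineMap p q s ∈ B) : FlatAlong R B := by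
  intro p hp q hq h s
  rcases lt_or_ge 1 s with hs | hs
  · exact hext p hp q hq h s hs
  rcases lt_or_ge s 0 with hs' | hs'
  · rw [← AffineMap.lineMap_apply_one_sub]
    exact hext q hq p hp (hR.symm h) _ (by linarith)
  · exact hconv.lineMap_mem hp hq h ⟨hs', hs⟩

theorem AffineAlong.of_forall_mem_Icc {f : V → ℝ} (hR : IsAlignment R)
    (hf : ∀ p q, R p q → ∀ s ∈ Icc (0 : ℝ) 1, f (lineMap p q s) = lineMap (f p) (f q) s) :
    AffineAlong R f := by
  have hnonneg : ∀ p q, R p q → ∀ s : ℝ, 0 ≤ s → f (lineMap p q s) = lineMap (f p) (f q) s := by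
    intro p q h s hs
    rcases le_or_gt s 1 with hs1 | hs1
    · exact hf p q h s ⟨hs, hs1⟩
    have hq := hf p _ (hR.lineMap_right h s) s⁻¹ ⟨by positivity, inv_le_one_of_one_le₀ hs1.le⟩
    rw [lineMap_lineMap_inv _ _ (by positivity)] at hq
    rw [hq, AffineMap.lineMap_lineMap_right, mul_inv_cancel₀ (by positivity),
      AffineMap.lineMap_apply_one]
  intro p q h s
  rcases le_total 0 s with hs | hs
  · exact hnonneg p q h s hs
  · rw [← AffineMap.lineMap_apply_one_sub, hnonneg q p (hR.symm h) _ (by linarith),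
      AffineMap.lineMap_apply_one_sub]

end Alignment

section Ends

/-- `l` is one of the two ends `atTop`, `atBot` of the real line. -/
def IsEnd (l : Filter ℝ) : Prop := l = atTop ∨ l = atBot

namespace IsEnd

variable {l : Filter ℝ} (hl : IsEnd l)
include hl

theorem neBot : l.NeBot := by
  rcases hl with rfl | rfl <;> infer_instance

theorem eventually_mem_of_frequently_mem {S : Set ℝ} (hS : OrdConnected S)
    (h : ∃ᶠ x in l, x ∈ S) : ∀ᶠ x in l, x ∈ S := by
  obtain ⟨a, ha⟩ : S.Nonempty := h.exists
  rcases hl with rfl | rfl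
  · filter_upwards [eventually_ge_atTop a] with x hx
    obtain ⟨b, hxb, hb⟩ := frequently_atTop.1 h x
    exact hS.out ha hb ⟨hx, hxb⟩
  · filter_upwards [eventually_le_atBot a] with x hx
    obtain ⟨b, hbx, hb⟩ := frequently_atBot.1 h x
    exact hS.out hb ha ⟨hbx, hx⟩

theorem tendsto_lineMap (v : ℝ) {r : ℝ} (hr : 0 < r) : Tendsto (fun u => lineMap v u r) l l := by
  simp only [AffineMap.lineMap_apply_ring]
  rcases hl with rfl | rfl
  · exact tendsto_atTop_add_const_left _ _ (tendsto_id.const_mul_atTop hr)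
  · exact tendsto_atBot_add_const_left _ _ (tendsto_id.const_mul_atBot hr)

end IsEnd

theorem exists_threshold {S : Set ℝ} (hS : OrdConnected S) (htop : ∀ᶠ u in atTop, u ∈ S)
    (hbot : ∀ᶠ u in atBot, u ∉ S) : ∃ a, (∀ u, a < u → u ∈ S) ∧ ∀ u, u < a → u ∉ S := by
  obtain ⟨N, hN⟩ := eventually_atTop.1 htop
  obtain ⟨M, hM⟩ := eventually_atBot.1 hbot
  have hbdd : BddBelow S := ⟨M, fun u hu => le_of_not_ge fun huM => hM u huM hu⟩
  refine ⟨sInf S, fun u hu => ?_, fun u hu hmem => hu.not_ge (csInf_le hbdd hmem)⟩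
  obtain ⟨w, hw, hwu⟩ := exists_lt_of_csInf_lt ⟨N, hN N le_rfl⟩ hu
  exact hS.out hw (hN _ (le_max_left N u)) ⟨hwu.le, le_max_right N u⟩

end Ends

section Fibers

variable {V : Type*} [AddCommGroup V] [Module ℝ V] {R : V → V → Prop} {F : Set (V × ℝ)}
  {l : Filter ℝ}

/-- The base points whose vertical line eventually stays in `F` along the filter `l`; it is used
with `l` one of the two ends of `ℝ`. -/
def fiberEnd (l : Filter ℝ) (F : Set (V × ℝ)) : Set V := {p | ∀ᶠ u in l, (p, u) ∈ F}

/-- `F` lies between the strict and the non-strict epigraph of `f`. -/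
structure IsAlmostEpigraph (f : V → ℝ) (F : Set (V × ℝ)) : Prop where
  mem {p : V} {u : ℝ} (h : f p < u) : (p, u) ∈ F
  notMem {p : V} {u : ℝ} (h : u < f p) : (p, u) ∉ F

theorem lineMap_prodMk (p q : V) (u v s : ℝ) :
    lineMap (p, u) (q, v) s = (lineMap p q s, lineMap u v s) := by
  ext <;> simp

theorem ConvexAlong.ordConnected_fiber (hR : IsAlignment R)
    (hF : ConvexAlong (InvImage R Prod.fst) F) (p : V) : OrdConnected {u | (p, u) ∈ F} := by
  have hline : {u : ℝ | (p, u) ∈ F} = lineMap (p, (0 : ℝ)) (p, 1) ⁻¹' F := by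
    ext u
    simp [lineMap_prodMk, AffineMap.lineMap_apply_ring]
  rw [hline]
  exact hF.ordConnected hR.invImage_fst (hR.refl p)

theorem ConvexAlong.convexAlong_fiberEnd (hF : ConvexAlong (InvImage R Prod.fst) F) :
    ConvexAlong R (fiberEnd l F) := by
  intro p hp q hq h z hz
  obtain ⟨s, hs, rfl⟩ := segment_eq_image_lineMap ℝ p q ▸ hz
  filter_upwards [hp, hq] with u hpu hqu
  simpa [lineMap_prodMk] using hF.lineMap_mem hpu hqu h hs

theorem fiberEnd_compl (hl : IsEnd l) (hR : IsAlignment R)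
    (hF : ConvexAlong (InvImage R Prod.fst) F) : fiberEnd l Fᶜ = (fiberEnd l F)ᶜ := by
  have := hl.neBot
  ext p
  refine ⟨fun hout hin => ?_, fun hp => ?_⟩
  · obtain ⟨u, hnot, hmem⟩ := (Filter.Eventually.and hout hin).exists
    exact hnot hmem
  · by_contra hnot
    exact hp (hl.eventually_mem_of_frequently_mem (hF.ordConnected_fiber hR p)
      (not_eventually.1 hnot |>.mono fun _ => not_not.1))

theorem MonotoneAlong.monotoneAlong_fiberEnd (hl : IsEnd l) (hR : IsAlignment R)
    (hF : MonotoneAlong (InvImage R Prod.fst) F) : MonotoneAlong R (fiberEnd l F) :=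
  ⟨hF.1.convexAlong_fiberEnd, by rw [← fiberEnd_compl hl hR hF.1]; exact hF.2.convexAlong_fiberEnd⟩

theorem ConvexAlong.prodMk_mem_of_mem_fiberEnd (hR : IsAlignment R)
    (hF : ConvexAlong (InvImage R Prod.fst) F) {p : V} (htop : p ∈ fiberEnd atTop F)
    (hbot : p ∈ fiberEnd atBot F) (u : ℝ) : (p, u) ∈ F := by
  obtain ⟨v, hvu, hv⟩ := ((eventually_le_atBot u).and hbot).exists
  obtain ⟨w, huw, hw⟩ := ((eventually_ge_atTop u).and htop).exists
  exact (hF.ordConnected_fiber hR p).out hv hw ⟨hvu, huw⟩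

-- A fixed point of the fibre over `p` is joined to points escaping to `l` in the fibre over `q`.
theorem ConvexAlong.lineMap_mem_fiberEnd (hl : IsEnd l)
    (hF : ConvexAlong (InvImage R Prod.fst) F) {p q : V} (h : R p q) {v : ℝ} (hp : (p, v) ∈ F)
    (hq : q ∈ fiberEnd l F) {r : ℝ} (hr : r ∈ Ioc (0 : ℝ) 1) :
    lineMap p q r ∈ fiberEnd l F := by
  filter_upwards [(hl.tendsto_lineMap v (inv_pos.2 hr.1)).eventually hq] with u hu
  have := hF.lineMap_mem hp hu h (Ioc_subset_Icc_self hr)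
  rwa [lineMap_prodMk, AffineMap.lineMap_lineMap_right, mul_inv_cancel₀ hr.1.ne',
    AffineMap.lineMap_apply_one] at this

theorem MonotoneAlong.lineMap_mem_fiberEnd_of_one_lt (hl : IsEnd l) (hR : IsAlignment R)
    (hF : MonotoneAlong (InvImage R Prod.fst) F) {p q : V} (h : R p q) {v : ℝ} (hp : (p, v) ∉ F)
    (hq : q ∈ fiberEnd l F) {s : ℝ} (hs : 1 < s) :
    lineMap p q s ∈ fiberEnd l F := by
  by_contra hout
  rw [← mem_compl_iff, ← fiberEnd_compl hl hR hF.1] at hout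
  have hq' := hF.2.lineMap_mem_fiberEnd hl (hR.lineMap_right h s) hp hout
    (r := s⁻¹) ⟨by positivity, inv_le_one_of_one_le₀ hs.le⟩
  rw [lineMap_lineMap_inv _ _ (by positivity), fiberEnd_compl hl hR hF.1] at hq'
  exact hq' hq

theorem MonotoneAlong.flatAlong_fiberEnd_inter (hR : IsAlignment R)
    (hF : MonotoneAlong (InvImage R Prod.fst) F) :
    FlatAlong R (fiberEnd atTop F ∩ fiberEnd atBot Fᶜ) := by
  refine .of_forall_one_lt hR (hF.1.convexAlong_fiberEnd.inter hF.2.convexAlong_fiberEnd)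
    fun p hp q hq h s hs => ⟨?_, ?_⟩
  · obtain ⟨v, hv⟩ := hp.2.exists
    exact hF.lineMap_mem_fiberEnd_of_one_lt (.inl rfl) hR h hv hq.1 hs
  · obtain ⟨v, hv⟩ := hp.1.exists
    exact hF.compl.lineMap_mem_fiberEnd_of_one_lt (.inr rfl) hR h (not_not.2 hv) hq.2 hs

theorem ConvexAlong.exists_isAlmostEpigraph (hR : IsAlignment R)
    (hF : ConvexAlong (InvImage R Prod.fst) F)
    (hends : fiberEnd atTop F ∩ fiberEnd atBot Fᶜ = univ) :
    ∃ f, IsAlmostEpigraph f F := by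
  have hends' := eq_univ_iff_forall.1 hends
  choose f hf using fun p =>
    exists_threshold (hF.ordConnected_fiber hR p) (hends' p).1 (hends' p).2
  exact ⟨f, fun h => (hf _).1 _ h, fun h => (hf _).2 _ h⟩

theorem IsAlmostEpigraph.affineAlong {f : V → ℝ} (hf : IsAlmostEpigraph f F) (hR : IsAlignment R)
    (hF : MonotoneAlong (InvImage R Prod.fst) F) : AffineAlong R f := by
  refine .of_forall_mem_Icc hR fun p q h s hs => ?_
  have hshift (ε : ℝ) : lineMap (f p + ε) (f q + ε) s = lineMap (f p) (f q) s + ε := by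
    simp only [AffineMap.lineMap_apply_ring]; ring
  refine le_antisymm (le_of_forall_pos_le_add fun ε hε => not_lt.1 fun hlt => ?_)
    (le_of_forall_pos_sub_le fun ε hε => not_lt.1 fun hlt => ?_)
  · refine hf.notMem hlt ?_
    rw [← hshift, ← lineMap_prodMk]
    exact hF.1.lineMap_mem (hf.mem (by linarith)) (hf.mem (by linarith)) h hs
  · refine absurd (hf.mem hlt) ?_
    rw [sub_eq_add_neg, ← hshift, ← lineMap_prodMk]
    exact hF.2.lineMap_mem (hf.notMem (by linarith)) (hf.notMem (by linarith)) h hs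

end Fibers

section AlmostHalfSpaces

variable {V W : Type*} [NormedAddCommGroup V] [NormedSpace ℝ V] [NormedAddCommGroup W]
  [NormedSpace ℝ W] {ℓ : StrongDual ℝ V} {k : ℝ} {E : Set V}

/-- `E` lies between the open half-space `{k < ℓ}` and the closed one `{k ≤ ℓ}`. -/
structure IsAlmostHalfSpace (ℓ : StrongDual ℝ V) (k : ℝ) (E : Set V) : Prop where
  ne_zero : ℓ ≠ 0
  mem {z : V} (h : k < ℓ z) : z ∈ E
  notMem {z : V} (h : ℓ z < k) : z ∉ E

namespace IsAlmostHalfSpace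

theorem compl (hE : IsAlmostHalfSpace ℓ k E) : IsAlmostHalfSpace (-ℓ) (-k) Eᶜ where
  ne_zero := neg_ne_zero.2 hE.ne_zero
  mem h := hE.notMem (neg_lt_neg_iff.1 h)
  notMem h := not_not.2 (hE.mem (neg_lt_neg_iff.1 h))

theorem preimage (hE : IsAlmostHalfSpace ℓ k E) {f : W →L[ℝ] V} (hf : Function.Surjective f) :
    IsAlmostHalfSpace (ℓ.comp f) k (f ⁻¹' E) where
  ne_zero h := hE.ne_zero <| ContinuousLinearMap.ext <| hf.forall.2 fun z => DFunLike.congr_fun h z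
  mem h := hE.mem h
  notMem h := hE.notMem h

theorem interior_eq (hE : IsAlmostHalfSpace ℓ k E) : interior E = {z | k < ℓ z} := by
  refine Subset.antisymm ?_ (interior_maximal (fun z => hE.mem) ?_)
  · have hsub : E ⊆ ℓ ⁻¹' Ici k := fun z hz => not_lt.1 fun h => hE.notMem h hz
    refine (interior_mono hsub).trans ?_
    rw [← (ℓ.isOpenMap_of_ne_zero hE.ne_zero).preimage_interior_eq_interior_preimage ℓ.continuous,
      interior_Ici]
    rfl
  · exact isOpen_lt continuous_const ℓ.continuous

protected theorem closure (hE : IsAlmostHalfSpace ℓ k E) : IsAlmostHalfSpace ℓ k (closure E) where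
  ne_zero := hE.ne_zero
  mem h := subset_closure (hE.mem h)
  notMem {z} h hz := by
    have hclosed : closure E ⊆ {z | k ≤ ℓ z} :=
      closure_minimal (fun z hz => not_lt.1 fun h => hE.notMem h hz)
        (isClosed_le continuous_const ℓ.continuous)
    exact h.not_ge (hclosed hz)

theorem interior_closure_subset (hE : IsAlmostHalfSpace ℓ k E) : interior (closure E) ⊆ E :=
  hE.closure.interior_eq.subset.trans fun _ => hE.mem

end IsAlmostHalfSpace

theorem IsAlmostEpigraph.isAlmostHalfSpace {f : V → ℝ} {F : Set (V × ℝ)}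
    (hF : IsAlmostEpigraph f F) {c : ℝ} (hf : ∀ p, f p = ℓ p + c) :
    IsAlmostHalfSpace (ContinuousLinearMap.snd ℝ V ℝ - ℓ.comp (.fst ℝ V ℝ)) c F where
  ne_zero h := by simpa using DFunLike.congr_fun h (0, 1)
  mem {z} h := hF.mem (by rw [hf]; exact add_lt_of_lt_sub_left h)
  notMem {z} h := hF.notMem (by rw [hf]; exact lt_add_of_sub_left_lt h)

theorem strongDual_apply_eq_sum {n : Type*} [Fintype n] [DecidableEq n] (ℓ : StrongDual ℝ (n → ℝ))
    (v : n → ℝ) : ℓ v = ∑ i, v i * ℓ (Pi.single i 1) := by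
  simpa only [map_sum, map_smul, smul_eq_mul] using congrArg ℓ (pi_eq_sum_univ' v)

theorem interior_subset_of_interior_diff_eq_empty {X : Type*} [TopologicalSpace X] {A B : Set X}
    (hAB : interior (A \ B) = ∅) (hB : interior (closure B) ⊆ B) : interior A ⊆ B := by
  refine (interior_maximal (fun z hz => ?_) isOpen_interior).trans hB
  by_contra hzB
  have hopen : interior A ∩ (closure B)ᶜ ⊆ interior (A \ B) :=
    interior_maximal (fun w hw => ⟨interior_subset hw.1, fun h => hw.2 (subset_closure h)⟩)
      (isOpen_interior.inter isClosed_closure.isOpen_compl)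
  exact (hAB ▸ hopen ⟨hz, hzB⟩ : z ∈ (∅ : Set X))

end AlmostHalfSpaces

section EventuallyMeets

variable {V : Type*} [AddCommGroup V] [Module ℝ V] [TopologicalSpace V] {E : Set V} {p q : V}

/-- Every segment with endpoints close to `p` and `q` meets `E`. -/
def EventuallyMeets (E : Set V) (p q : V) : Prop :=
  ∀ᶠ z in 𝓝 (p, q), (segment ℝ z.1 z.2 ∩ E).Nonempty

theorem eventuallyMeets_of_mem_interior (hp : p ∈ interior E) : EventuallyMeets E p q := by
  filter_upwards [continuousAt_fst.eventually (mem_interior_iff_mem_nhds.1 hp)] with z hz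
  exact ⟨z.1, left_mem_segment ℝ _ _, hz⟩

theorem eventuallyMeets_of_zeroLocus_subset [IsTopologicalAddGroup V] [ContinuousSMul ℝ V]
    {U : Set V} {g : V → ℝ} (hU : IsOpen U) (hUconv : Convex ℝ U) (hg : Continuous g)
    (hzero : ∀ z ∈ U, g z = 0 → z ∈ E) (hp : p ∈ U) (hq : q ∈ U) (hgp : g p < 0)
    (hgq : 0 < g q) : EventuallyMeets E p q := by
  have hp' : ∀ᶠ z in 𝓝 p, z ∈ U ∧ g z < 0 :=
    (hU.eventually_mem hp).and (hg.continuousAt.eventually_lt_const hgp)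
  have hq' : ∀ᶠ z in 𝓝 q, z ∈ U ∧ 0 < g z :=
    (hU.eventually_mem hq).and (hg.continuousAt.eventually_const_lt hgq)
  filter_upwards [hp'.prod_inl_nhds q, hq'.prod_inr_nhds p] with z ⟨h1U, h1g⟩ ⟨h2U, h2g⟩
  obtain ⟨w, hw, hgw⟩ := (convex_segment z.1 z.2).isPreconnected.intermediate_value
    (left_mem_segment ℝ _ _) (right_mem_segment ℝ _ _) hg.continuousOn ⟨h1g.le, h2g.le⟩
  exact ⟨w, hw, hzero w (hUconv.segment_subset h1U h2U hw) hgw⟩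

end EventuallyMeets

/-- The Heisenberg group, with points written `((x, y), t)`. -/
abbrev Heisenberg : Type := (ℝ × ℝ) × ℝ

namespace Heisenberg

/-- The signed area spanned by two plane vectors. -/
def area (v w : ℝ × ℝ) : ℝ := v.1 * w.2 - v.2 * w.1

/-- The group product of `p` with the horizontal element `(v, 0)`. -/
def move (p : Heisenberg) (v : ℝ × ℝ) : Heisenberg := (p.1 + v, p.2 - 2 * area p.1 v)

/-- The vertical distance from `q` to the plane of horizontal directions at `p`. -/
def alignDefect (p q : Heisenberg) : ℝ := q.2 - p.2 + 2 * area p.1 q.1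

/-- Some horizontal line contains both points. -/
def Aligned (p q : Heisenberg) : Prop := alignDefect p q = 0

/-- The horizontal line through `p` with direction `v`. -/
def horizontalLine (p : Heisenberg) (v : ℝ × ℝ) : Set Heisenberg :=
  range fun s : ℝ => move p (s • v)

/-- The squared Euclidean norm of a plane vector (the norm of `ℝ × ℝ` is the supremum norm). -/
def planeNormSq (v : ℝ × ℝ) : ℝ := v.1 ^ 2 + v.2 ^ 2

theorem planeNormSq_ne_zero {v : ℝ × ℝ} (hv : v ≠ 0) : planeNormSq v ≠ 0 := by
  intro h
  rw [planeNormSq] at h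
  exact hv (Prod.ext (by simp; nlinarith) (by simp; nlinarith))

theorem exists_area_eq_one {v : ℝ × ℝ} (hv : v ≠ 0) : ∃ w, area v w = 1 := by
  refine ⟨(planeNormSq v)⁻¹ • (-v.2, v.1), ?_⟩
  have := planeNormSq_ne_zero hv
  simp [area]
  field_simp
  simp [planeNormSq]

theorem exists_smul_of_area_eq_zero {v w : ℝ × ℝ} (hv : v ≠ 0) (h : area v w = 0) :
    ∃ r : ℝ, w = r • v := by
  obtain ⟨u, hu⟩ := exists_area_eq_one hv
  refine ⟨-area u w, Prod.ext ?_ ?_⟩ <;>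
    simp only [area, Prod.smul_fst, Prod.smul_snd, smul_eq_mul] at *
  · linear_combination (-w.1) * hu + u.1 * h
  · linear_combination (-w.2) * hu + u.2 * h

theorem alignDefect_lineMap (p q : Heisenberg) (s t : ℝ) :
    alignDefect (lineMap p q s) (lineMap p q t) = (t - s) * alignDefect p q := by
  simp only [alignDefect, area, AffineMap.fst_lineMap, AffineMap.snd_lineMap,
    AffineMap.lineMap_apply_ring]
  ring

theorem isAlignment_aligned : IsAlignment Aligned where
  refl p := by simp [Aligned, alignDefect, area, mul_comm]
  lineMap h s t := by rw [Aligned, alignDefect_lineMap, h, mul_zero]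

theorem aligned_move (p : Heisenberg) (v : ℝ × ℝ) : Aligned p (move p v) := by
  simp only [Aligned, alignDefect, move, area, Prod.fst_add, Prod.snd_add]
  ring

theorem Aligned.eq_move {p q : Heisenberg} (h : Aligned p q) : q = move p (q.1 - p.1) := by
  ext <;> simp only [Aligned, alignDefect, move, area, Prod.fst_sub, Prod.snd_sub, Prod.fst_add,
    Prod.snd_add] at *
  · ring
  · ring
  · linear_combination h

theorem lineMap_move (p : Heisenberg) (v : ℝ × ℝ) (s : ℝ) :
    lineMap p (move p v) s = move p (s • v) := by
  ext <;> simp [move, area, AffineMap.lineMap_apply_ring'] <;> ring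

theorem move_zero (p : Heisenberg) : move p 0 = p := by
  simp [move, area]

theorem move_smul_move_smul (p : Heisenberg) (v : ℝ × ℝ) (s t : ℝ) :
    move (move p (s • v)) (t • v) = move p ((s + t) • v) := by
  ext <;> simp [move, area] <;> ring

theorem move_move_neg (p : Heisenberg) (v : ℝ × ℝ) : move (move p v) (-v) = p := by
  ext
  · simp [move]
  · simp [move]
  · simp only [move, area, Prod.fst_add, Prod.snd_add, Prod.fst_neg, Prod.snd_neg]
    ring

theorem continuous_move : Continuous fun z : Heisenberg × (ℝ × ℝ) => move z.1 z.2 := by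
  unfold move area
  fun_prop

-- Two moves in one direction with a transverse one in between also move vertically.
theorem eq_move_move_move {p z : Heisenberg} {m : ℝ}
    (h : m * (2 * (z.1.2 - p.1.2)) = alignDefect p z) :
    z = move (move (move p ((z.1.1 - p.1.1 - m) / 2, 0)) (0, z.1.2 - p.1.2))
      ((z.1.1 - p.1.1 + m) / 2, 0) := by
  ext <;> simp only [alignDefect, move, area, Prod.fst_add, Prod.snd_add] at *
  · ring
  · ring
  · linear_combination -h

/-- The point aligned with `p` and with `q` whose projection lies on the perpendicular bisector of
`p.1` and `q.1`; it is meaningful only for `p.1 ≠ q.1` (otherwise a division by zero occurs). -/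
def bridge (p q : Heisenberg) : Heisenberg :=
  move p ((1 / 2 : ℝ) • (q.1 - p.1) +
    (alignDefect p q / (2 * planeNormSq (q.1 - p.1))) • (p.1.2 - q.1.2, q.1.1 - p.1.1))

theorem aligned_bridge_left (p q : Heisenberg) : Aligned p (bridge p q) :=
  aligned_move _ _

theorem aligned_bridge_right {p q : Heisenberg} (h : p.1 ≠ q.1) : Aligned (bridge p q) q := by
  have hslope : alignDefect p q / (2 * planeNormSq (q.1 - p.1)) *
      (2 * planeNormSq (q.1 - p.1)) = alignDefect p q :=
    div_mul_cancel₀ _ (mul_ne_zero two_ne_zero (planeNormSq_ne_zero (sub_ne_zero.2 h.symm)))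
  rw [bridge]
  generalize alignDefect p q / (2 * planeNormSq (q.1 - p.1)) = slope at *
  simp only [Aligned, alignDefect, move, area, planeNormSq, Prod.fst_add, Prod.snd_add,
    Prod.smul_fst, Prod.smul_snd, smul_eq_mul, Prod.fst_sub, Prod.snd_sub] at *
  linear_combination -hslope

theorem Aligned.bridge_eq {p q : Heisenberg} (h : Aligned p q) :
    bridge p q = lineMap p q (1 / 2 : ℝ) := by
  calc bridge p q = move p ((1 / 2 : ℝ) • (q.1 - p.1)) := by
        rw [bridge, show alignDefect p q = 0 from h, zero_div, zero_smul, add_zero]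
    _ = lineMap p q (1 / 2 : ℝ) := by rw [← lineMap_move, ← h.eq_move]

theorem continuousAt_bridge {p q : Heisenberg} (h : p.1 ≠ q.1) :
    ContinuousAt (fun z : Heisenberg × Heisenberg => bridge z.1 z.2) (p, q) := by
  have hslope : ContinuousAt (fun z : Heisenberg × Heisenberg =>
      alignDefect z.1 z.2 / (2 * planeNormSq (z.2.1 - z.1.1))) (p, q) := by
    refine ContinuousAt.div ?_ ?_
      (mul_ne_zero two_ne_zero (planeNormSq_ne_zero (sub_ne_zero.2 h.symm)))
    · unfold alignDefect area
      fun_prop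
    · unfold planeNormSq
      fun_prop
  unfold bridge move area
  fun_prop

theorem Aligned.fst_ne {p q : Heisenberg} (h : Aligned p q) (hne : p ≠ q) : p.1 ≠ q.1 :=
  fun hfst => hne (by rw [h.eq_move, hfst, sub_self, move_zero])

section ConvexSets

variable {E : Set Heisenberg}

-- If `c'` near `c` were outside `E` and `r'` near `r` in `E`, convexity along the line from `r'`
-- through `bridge c' r'` would put the bridge into `E`, and then the line from there through `c'`
-- would put `c'` into `E`.
theorem notMem_closure_of_eventuallyMeets (hE : ConvexAlong Aligned E) {c r : Heisenberg}
    (h : Aligned c r) (hne : c ≠ r) {μ : ℝ} (hμ : 0 < μ)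
    (hend : EventuallyMeets E (lineMap c r (-μ)) c)
    (hmid : EventuallyMeets E (lineMap c r (-μ)) (lineMap c r (1 / 2 : ℝ)))
    (hc : c ∈ closure Eᶜ) : r ∉ closure E := by
  intro hr
  have hfst := h.fst_ne hne
  let z₀ : Heisenberg × Heisenberg := (c, r)
  have hleft : Tendsto Prod.fst (𝓝 z₀) (𝓝 c) := continuousAt_fst
  have hright : Tendsto Prod.snd (𝓝 z₀) (𝓝 r) := continuousAt_snd
  have hbridge : Tendsto (fun z : Heisenberg × Heisenberg => bridge z.1 z.2) (𝓝 z₀)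
      (𝓝 (lineMap c r (1 / 2 : ℝ))) := h.bridge_eq ▸ continuousAt_bridge hfst
  have hbeforeEnd : Tendsto (fun z : Heisenberg × Heisenberg =>
      lineMap z.1 (bridge z.1 z.2) (-(2 * μ))) (𝓝 z₀) (𝓝 (lineMap c r (-μ))) := by
    rw [show -μ = -(2 * μ) * (1 / 2) by ring, ← AffineMap.lineMap_lineMap_right]
    exact hleft.lineMap hbridge tendsto_const_nhds
  have hbeforeMid : Tendsto (fun z : Heisenberg × Heisenberg =>
      lineMap (bridge z.1 z.2) z.2 (-(1 + 2 * μ))) (𝓝 z₀) (𝓝 (lineMap c r (-μ))) := by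
    rw [show -μ = 1 - (1 - -(1 + 2 * μ)) * (1 - 1 / 2) by ring, ← AffineMap.lineMap_lineMap_left]
    exact hbridge.lineMap hright tendsto_const_nhds
  have hfst' : ∀ᶠ z in 𝓝 z₀, z.1.1 ≠ z.2.1 :=
    (isOpen_ne_fun (by fun_prop) (by fun_prop)).eventually_mem (x := z₀) hfst
  have hfreq : ∃ᶠ z in 𝓝 z₀, z ∈ Eᶜ ×ˢ E :=
    mem_closure_iff_frequently.1 (by rw [closure_prod_eq]; exact ⟨hc, hr⟩)
  obtain ⟨⟨c', r'⟩, ⟨hc', hr'⟩, hne', hmeetEnd, hmeetMid⟩ := (hfreq.and_eventually (hfst'.and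
    (((hbeforeEnd.prodMk_nhds hleft).eventually hend).and
      ((hbeforeMid.prodMk_nhds hbridge).eventually hmid)))).exists
  have hmidMem : bridge c' r' ∈ E := hE.mem_of_segment_inter_nonempty isAlignment_aligned
    (aligned_bridge_right hne') (by positivity) hr' hmeetMid
  exact hc' (hE.mem_of_segment_inter_nonempty isAlignment_aligned (aligned_bridge_left c' r')
    (by positivity) hmidMem hmeetEnd)

theorem lineMap_mem_interior_compl (hE : ConvexAlong Aligned E) {q c : Heisenberg}
    (h : Aligned q c) (hq : q ∈ interior E) (hc : c ∈ frontier E) {s : ℝ} (hs : 1 < s) :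
    lineMap q c s ∈ interior Eᶜ := by
  rw [interior_compl]
  have hs' : s - 1 ≠ 0 := by linarith
  have hback : lineMap c (lineMap q c s) (-(s - 1)⁻¹) = q := by
    calc lineMap c (lineMap q c s) (-(s - 1)⁻¹)
        = lineMap q c (lineMap 1 s (-(s - 1)⁻¹)) := by
          rw [AffineMap.apply_lineMap, AffineMap.lineMap_apply_one]
      _ = q := by
          rw [AffineMap.lineMap_apply_ring', neg_mul, inv_mul_cancel₀ hs', neg_add_cancel,
            AffineMap.lineMap_apply_zero]
  have hmeets (z : Heisenberg) : EventuallyMeets E (lineMap c (lineMap q c s) (-(s - 1)⁻¹)) z :=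
    eventuallyMeets_of_mem_interior (by rwa [hback])
  refine notMem_closure_of_eventuallyMeets hE ?_ ?_ (inv_pos.2 (sub_pos.2 hs)) (hmeets _)
    (hmeets _) (frontier_subset_closure (frontier_compl E ▸ hc))
  · simpa using isAlignment_aligned.lineMap h 1 s
  · intro heq
    rw [← heq, AffineMap.lineMap_same_apply] at hback
    exact disjoint_left.1 disjoint_interior_frontier hq (hback ▸ hc)

end ConvexSets

section Frontier

variable {E : Set Heisenberg}

theorem lineMap_mem_interior_of_lt_one (hE : MonotoneAlong Aligned E) {x p : Heisenberg}
    (h : Aligned x p) (hx : x ∈ interior E) (hp : p ∈ frontier E) {s : ℝ} (hs : s < 1) :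
    lineMap x p s ∈ interior E := by
  have hbeyond : lineMap x p (2 : ℝ) ∈ interior Eᶜ :=
    lineMap_mem_interior_compl hE.1 h hx hp one_lt_two
  have hback := lineMap_mem_interior_compl hE.2
    (by simpa using isAlignment_aligned.lineMap h 2 1) hbeyond (by rwa [frontier_compl])
    (s := 2 - s) (by linarith)
  have hparam : lineMap (2 : ℝ) 1 (2 - s) = s := by rw [AffineMap.lineMap_apply_ring']; ring
  rw [compl_compl] at hback
  nth_rewrite 2 [← AffineMap.lineMap_apply_one (k := ℝ) x p] at hback
  rwa [← AffineMap.apply_lineMap, hparam] at hback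

theorem lineMap_notMem_frontier (hE : MonotoneAlong Aligned E) {x p : Heisenberg}
    (h : Aligned x p) (hx : x ∉ frontier E) (hp : p ∈ frontier E) {s : ℝ} (hs : s ≠ 1) :
    lineMap x p s ∉ frontier E := by
  have hinterior : ∀ D : Set Heisenberg, MonotoneAlong Aligned D → x ∈ interior D →
      p ∈ frontier D → lineMap x p s ∉ frontier D := by
    intro D hD hxD hpD
    rcases hs.lt_or_gt with hs | hs
    · exact disjoint_left.1 disjoint_interior_frontier
        (lineMap_mem_interior_of_lt_one hD h hxD hpD hs)
    · rw [← frontier_compl]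
      exact disjoint_left.1 disjoint_interior_frontier
        (lineMap_mem_interior_compl hD.1 h hxD hpD hs)
  have hx' : x ∈ interior E ∪ interior Eᶜ := by rwa [← compl_frontier_eq_union_interior]
  rcases hx' with hxE | hxE
  · exact hinterior E hE hxE hp
  · rw [← frontier_compl] at hp ⊢
    exact hinterior Eᶜ hE.compl hxE hp

theorem flatAlong_frontier (hE : MonotoneAlong Aligned E) : FlatAlong Aligned (frontier E) := by
  intro p hp q hq h s
  by_contra hx
  have hs : s ≠ 0 := by
    rintro rfl
    exact hx (by simpa using hp)
  have hxp := isAlignment_aligned.symm (isAlignment_aligned.lineMap_right h s)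
  refine lineMap_notMem_frontier hE hxp hx hp (s := 1 - s⁻¹) (by simpa using hs) ?_
  rwa [AffineMap.lineMap_apply_one_sub, lineMap_lineMap_inv _ _ hs]

theorem horizontalLine_subset {B : Set Heisenberg} (hB : FlatAlong Aligned B) {p : Heisenberg}
    {v : ℝ × ℝ} {s t : ℝ} (hst : s ≠ t) (hs : move p (s • v) ∈ B) (ht : move p (t • v) ∈ B) :
    horizontalLine p v ⊆ B := by
  rintro _ ⟨r, rfl⟩
  have hline := hB hs ht (by simpa only [← lineMap_move] using
    isAlignment_aligned.lineMap (aligned_move p v) s t) ((r - s) / (t - s))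
  have hparam : lineMap s t ((r - s) / (t - s)) = r := by
    rw [AffineMap.lineMap_apply_ring', div_mul_cancel₀ _ (sub_ne_zero.2 hst.symm), sub_add_cancel]
  rwa [← lineMap_move, ← lineMap_move, ← AffineMap.apply_lineMap, hparam, lineMap_move] at hline

theorem exists_horizontalLine_subset_frontier (hE : MonotoneAlong Aligned E) {p : Heisenberg}
    (hp : p ∈ frontier E) : ∃ v ≠ 0, horizontalLine p v ⊆ frontier E := by
  by_contra! hnone
  have hcover : ({0}ᶜ : Set (ℝ × ℝ)) ⊆ move p ⁻¹' interior E ∪ move p ⁻¹' interior Eᶜ := by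
    intro v hv
    rw [← preimage_union, ← compl_frontier_eq_union_interior]
    exact fun hmem => hnone v hv (horizontalLine_subset (flatAlong_frontier hE) zero_ne_one
      (by rwa [zero_smul, move_zero]) (by rwa [one_smul]))
  have hantipodal : ∀ D : Set Heisenberg, MonotoneAlong Aligned D → p ∈ frontier D →
      ¬ ({0}ᶜ : Set (ℝ × ℝ)) ⊆ move p ⁻¹' interior D := by
    intro D hD hpD hsub
    have hbeyond := lineMap_mem_interior_compl hD.1
      (isAlignment_aligned.symm (aligned_move p (1, 0))) (hsub (by simp)) hpD
      one_lt_two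
    rw [← AffineMap.lineMap_apply_one_sub, lineMap_move] at hbeyond
    exact interior_subset hbeyond (interior_subset (hsub (by norm_num)))
  have hopen (D : Set Heisenberg) : IsOpen (move p ⁻¹' interior D) :=
    isOpen_interior.preimage (continuous_move.comp (Continuous.prodMk_right p))
  have hconn : IsPreconnected ({0}ᶜ : Set (ℝ × ℝ)) :=
    (isConnected_compl_singleton_of_one_lt_rank (by simp [one_add_one_eq_two]) 0).isPreconnected
  rcases hconn.subset_or_subset (hopen E) (hopen Eᶜ)
    (disjoint_left.2 fun v hv hv' => interior_subset hv' (interior_subset hv)) hcover with hin | hin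
  · exact hantipodal E hE hp hin
  · exact hantipodal Eᶜ hE.compl (by rwa [frontier_compl]) hin

end Frontier

section Frame

/-- The linear part of `frame`. -/
def frameLinear (a v w : ℝ × ℝ) : Heisenberg →ₗ[ℝ] Heisenberg where
  toFun z := (z.1.1 • v + z.1.2 • w, area v w * z.2 - 2 * area a (z.1.1 • v + z.1.2 • w))
  map_add' z z' := by ext <;> simp [area] <;> ring
  map_smul' r z := by ext <;> simp [area] <;> ring

theorem frameLinear_injective (a : ℝ × ℝ) {v w : ℝ × ℝ} (h : area v w ≠ 0) :
    Function.Injective (frameLinear a v w) := by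
  rw [injective_iff_map_eq_zero]
  rintro ⟨⟨x, y⟩, t⟩ hz
  obtain ⟨hfst, ht⟩ := Prod.ext_iff.1 hz
  simp only [frameLinear, LinearMap.coe_mk, AddHom.coe_mk, Prod.fst_zero, Prod.snd_zero] at hfst ht
  rw [hfst] at ht
  obtain ⟨h1, h2⟩ := Prod.ext_iff.1 hfst
  simp only [Prod.fst_add, Prod.snd_add, Prod.smul_fst, Prod.smul_snd, smul_eq_mul,
    Prod.fst_zero, Prod.snd_zero] at h1 h2
  have hx : area v w * x = 0 := by rw [area]; linear_combination w.2 * h1 - w.1 * h2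
  have hy : area v w * y = 0 := by rw [area]; linear_combination v.1 * h2 - v.2 * h1
  have ht' : area v w * t = 0 := by simpa [area] using ht
  simp_all

/-- The affine coordinate change that moves the origin to `p` and the two coordinate axes of the
plane to the directions `v` and `w`; it preserves alignment. -/
def frame (p : Heisenberg) (v w : ℝ × ℝ) (h : area v w ≠ 0) : Heisenberg ≃ᴬ[ℝ] Heisenberg :=
  (LinearEquiv.ofInjectiveEndo _ (frameLinear_injective p.1 h)).toContinuousLinearEquiv
    |>.toContinuousAffineEquiv.trans (ContinuousAffineEquiv.constVAdd ℝ Heisenberg p)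

variable (p : Heisenberg) {v w : ℝ × ℝ} (h : area v w ≠ 0)

theorem frame_apply (z : Heisenberg) : frame p v w h z = (p.1 + (z.1.1 • v + z.1.2 • w),
    p.2 + (area v w * z.2 - 2 * area p.1 (z.1.1 • v + z.1.2 • w))) :=
  rfl

theorem alignDefect_frame (z z' : Heisenberg) :
    alignDefect (frame p v w h z) (frame p v w h z') = area v w * alignDefect z z' := by
  simp only [frame_apply, alignDefect, area, Prod.fst_add, Prod.snd_add, Prod.smul_fst,
    Prod.smul_snd, smul_eq_mul]
  ring

theorem Aligned.frame {z z' : Heisenberg} (hz : Aligned z z') :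
    Aligned (frame p v w h z) (frame p v w h z') := by
  rw [Aligned, alignDefect_frame, hz, mul_zero]

theorem frame_move (z : Heisenberg) (u : ℝ × ℝ) :
    frame p v w h (move z u) = move (frame p v w h z) (u.1 • v + u.2 • w) := by
  ext <;> simp [frame_apply, move, area] <;> ring

theorem convexAlong_preimage_frame {C : Set Heisenberg} (hC : ConvexAlong Aligned C) :
    ConvexAlong Aligned (frame p v w h ⁻¹' C) :=
  hC.preimage (f := (frame p v w h : Heisenberg →ᵃ[ℝ] Heisenberg)) fun _ _ hz => hz.frame p h

theorem flatAlong_preimage_frame {B : Set Heisenberg} (hB : FlatAlong Aligned B) :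
    FlatAlong Aligned (frame p v w h ⁻¹' B) :=
  hB.preimage (f := (frame p v w h : Heisenberg →ᵃ[ℝ] Heisenberg)) fun _ _ hz => hz.frame p h

end Frame

section Quadric

variable {a b : Heisenberg} {v : ℝ × ℝ}

-- The shift by `r` along the first line makes its origin aligned with the origin of the second.
theorem exists_frame_eq_move (h : area v (b.1 - a.1) ≠ 0) : ∃ r : ℝ, ∀ s : ℝ,
    frame (move a (r • v)) v (b.1 - a.1) h ((s, 0), 0) = move a ((r + s) • v) ∧
    frame (move a (r • v)) v (b.1 - a.1) h ((s, 1), 2 * s) = move b ((r + s) • v) := by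
  have hcancel : alignDefect a b / (-4 * area v (b.1 - a.1)) * (-4 * area v (b.1 - a.1)) =
      alignDefect a b := div_mul_cancel₀ _ (mul_ne_zero (by norm_num) h)
  refine ⟨alignDefect a b / (-4 * area v (b.1 - a.1)), fun s => ?_⟩
  generalize alignDefect a b / (-4 * area v (b.1 - a.1)) = r at *
  simp only [alignDefect, area, Prod.fst_sub, Prod.snd_sub] at hcancel
  constructor <;> ext <;>
    simp only [frame_apply, move, area, Prod.fst_add, Prod.snd_add, Prod.smul_fst, Prod.smul_snd,
      smul_eq_mul, Prod.fst_sub, Prod.snd_sub]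
  · ring
  · ring
  · ring
  · ring
  · ring
  · linear_combination hcancel

/-- The defining function of the hyperbolic paraboloid swept out by the horizontal lines that meet
both of the parallel lines `((s, 0), 0)` and `((s, 1), 2 * s)`. -/
def quadric (z : Heisenberg) : ℝ := 2 * z.1.1 * z.1.2 + z.2 * (1 - 2 * z.1.2)

theorem continuous_quadric : Continuous quadric := by
  unfold quadric
  fun_prop

theorem aligned_of_quadric_ruling (s : ℝ) : Aligned ((s, 0), 0) ((-s, 1), 2 * -s) := by
  simp only [Aligned, alignDefect, area]
  ring

theorem eq_lineMap_of_quadric_eq_zero {z : Heisenberg} (hz : quadric z = 0) (hy : z.1.2 ≠ 0) :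
    z = lineMap ((-(z.2 / (2 * z.1.2)), 0), 0)
      ((- -(z.2 / (2 * z.1.2)), 1), 2 * - -(z.2 / (2 * z.1.2))) z.1.2 := by
  simp only [quadric] at hz
  ext <;> simp [AffineMap.lineMap_apply_ring']
  · field_simp
    linear_combination hz
  · field_simp

end Quadric

section Linking

variable {E : Set Heisenberg}

theorem mem_of_quadric_eq_zero (hE : ConvexAlong Aligned E) {N : ℝ} (hN : 0 ≤ N)
    (hrays : ∀ s ≥ N, ((s, 0), 0) ∈ E ∧ ((-s, 1), 2 * -s) ∈ E) {z : Heisenberg}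
    (hz : quadric z = 0) (hy : z.1.2 ∈ Ioo (0 : ℝ) 1) (ht : z.2 < -(2 * N)) : z ∈ E := by
  have hs : N ≤ -(z.2 / (2 * z.1.2)) := by
    rw [← neg_div, le_div_iff₀ (mul_pos two_pos hy.1)]
    nlinarith [hy.2]
  rw [eq_lineMap_of_quadric_eq_zero hz hy.1.ne']
  exact hE.lineMap_mem (hrays _ hs).1 (hrays _ hs).2 (aligned_of_quadric_ruling _)
    (Ioo_subset_Icc_self hy)

-- The segments joining the two rays sweep out a piece of the quadric that separates
-- `lineMap c r (-1)` from both `c` and `lineMap c r (1 / 2)`.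
theorem not_eventually_mem_opposite_rays_model (hE : ConvexAlong Aligned E) (hdense : Dense E)
    (hdense' : Dense Eᶜ) (htop : ∀ᶠ s : ℝ in atTop, ((s, 0), 0) ∈ E) :
    ¬ ∀ᶠ s : ℝ in atBot, ((s, 1), 2 * s) ∈ E := by
  intro hbot
  obtain ⟨M, hM⟩ := eventually_atTop.1 (htop.and (tendsto_neg_atTop_atBot.eventually hbot))
  obtain ⟨N, hN, hrays⟩ : ∃ N, 0 ≤ N ∧ ∀ s ≥ N, ((s, 0), 0) ∈ E ∧ ((-s, 1), 2 * -s) ∈ E :=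
    ⟨max 0 M, le_max_left 0 M, fun s hs => hM s ((le_max_right 0 M).trans hs)⟩
  let U : Set Heisenberg := (univ ×ˢ Ioo 0 1) ×ˢ Iio (-(2 * N))
  let c : Heisenberg := ((1, 1 / 2), -(2 * N) - 2)
  let r : Heisenberg := ((3, 1 / 2), -(2 * N))
  have hback : lineMap c r (-1 : ℝ) = ((-1, 1 / 2), -(2 * N) - 4) := by
    ext <;> simp [c, r, AffineMap.lineMap_apply_ring'] <;> ring
  have hmid : lineMap c r (1 / 2 : ℝ) = ((2, 1 / 2), -(2 * N) - 1) := by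
    ext <;> simp [c, r, AffineMap.lineMap_apply_ring'] <;> ring
  have hmeets : ∀ z ∈ U, 0 < quadric z → EventuallyMeets E (lineMap c r (-1 : ℝ)) z := by
    intro z hzU hz
    refine eventuallyMeets_of_zeroLocus_subset (U := U)
      ((isOpen_univ.prod isOpen_Ioo).prod isOpen_Iio)
      ((convex_univ.prod (convex_Ioo 0 1)).prod (convex_Iio _)) continuous_quadric
      (fun w hw hw0 => mem_of_quadric_eq_zero hE hN hrays hw0 hw.1.2 hw.2) ?_ hzU ?_ hz
    · rw [hback]; norm_num [U]
    · rw [hback]; norm_num [quadric]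
  refine notMem_closure_of_eventuallyMeets hE (c := c) (r := r) ?_ ?_ one_pos
    (hmeets _ (by norm_num [U, c]) (by norm_num [quadric, c]))
    (hmid ▸ hmeets _ (by norm_num [U]) (by norm_num [quadric])) (hdense' c) (hdense r)
  · norm_num [Aligned, alignDefect, area, c, r]
  · norm_num [c, r]

theorem not_eventually_mem_opposite_rays (hE : ConvexAlong Aligned E) (hdense : Dense E)
    (hdense' : Dense Eᶜ) {p q : Heisenberg} {v : ℝ × ℝ} (h : area v (q.1 - p.1) ≠ 0)
    (htop : ∀ᶠ s : ℝ in atTop, move p (s • v) ∈ E) :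
    ¬ ∀ᶠ s : ℝ in atBot, move q (s • v) ∈ E := by
  intro hbot
  obtain ⟨r, hr⟩ := exists_frame_eq_move h
  let e := frame (move p (r • v)) v (q.1 - p.1) h
  have hopen : IsOpenMap e := e.toHomeomorph.isOpenMap
  refine not_eventually_mem_opposite_rays_model (convexAlong_preimage_frame _ h hE)
    (hdense.preimage hopen) (hdense'.preimage hopen) ?_ ?_
  · filter_upwards [(tendsto_atTop_add_const_left atTop r tendsto_id).eventually htop] with s hs
    rwa [mem_preimage, (hr s).1]
  · filter_upwards [(tendsto_atBot_add_const_left atBot r tendsto_id).eventually hbot] with s hs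
    rwa [mem_preimage, (hr s).2]

end Linking

section Recession

variable {E : Set Heisenberg} {v w : ℝ × ℝ}

/-- Moving from a point of `E` in the direction `v` never leaves `E`. -/
def IsRecessionDirection (E : Set Heisenberg) (v : ℝ × ℝ) : Prop :=
  ∀ p ∈ E, ∀ s : ℝ, 0 ≤ s → move p (s • v) ∈ E

theorem ordConnected_move_smul (hE : ConvexAlong Aligned E) (p : Heisenberg) (v : ℝ × ℝ) :
    OrdConnected {s : ℝ | move p (s • v) ∈ E} := by
  simp only [← lineMap_move]
  exact hE.ordConnected isAlignment_aligned (aligned_move p v)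

theorem isRecessionDirection_of_eventually (hE : ConvexAlong Aligned E)
    (h : ∀ p, ∀ᶠ s : ℝ in atTop, move p (s • v) ∈ E) : IsRecessionDirection E v := by
  intro p hp s hs
  obtain ⟨r, hsr, hr⟩ := ((eventually_ge_atTop s).and (h p)).exists
  exact (ordConnected_move_smul hE p v).out (show move p ((0 : ℝ) • v) ∈ E by
    rwa [zero_smul, move_zero]) hr ⟨hs, hsr⟩

theorem area_sub_comm (v a b : ℝ × ℝ) : area v (a - b) = -area v (b - a) := by
  simp only [area, Prod.fst_sub, Prod.snd_sub]
  ring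

theorem exists_area_sub_ne_zero (hv : v ≠ 0) (a b : ℝ × ℝ) :
    ∃ c, area v (c - a) ≠ 0 ∧ area v (c - b) ≠ 0 := by
  obtain ⟨w, hw⟩ := exists_area_eq_one hv
  have hline (r : ℝ) (d : ℝ × ℝ) : area v (a + r • w - d) = r - area v (d - a) := by
    simp only [area, Prod.fst_add, Prod.snd_add, Prod.fst_sub, Prod.snd_sub, Prod.smul_fst,
      Prod.smul_snd, smul_eq_mul] at *
    linear_combination r * hw
  refine ⟨a + (|area v (b - a)| + 1) • w, ?_, ?_⟩ <;> rw [hline] <;> apply ne_of_gt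
  · rw [sub_self, show area v 0 = 0 by simp [area], sub_zero]
    positivity
  · linarith [le_abs_self (area v (b - a))]

theorem isRecessionDirection_or_neg (hE : MonotoneAlong Aligned E) (hdense : Dense E)
    (hdense' : Dense Eᶜ) (hv : v ≠ 0) :
    IsRecessionDirection E v ∨ IsRecessionDirection E (-v) := by
  let InEnd (l : Filter ℝ) (p : Heisenberg) : Prop := ∀ᶠ s in l, move p (s • v) ∈ E
  have hcompl {l : Filter ℝ} (hl : IsEnd l) {p : Heisenberg} (h : ¬ InEnd l p) :
      ∀ᶠ s in l, move p (s • v) ∈ Eᶜ :=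
    hl.eventually_mem_of_frequently_mem (ordConnected_move_smul hE.2 p v) (not_eventually.1 h)
  have hopposite (p q : Heisenberg) (h : area v (q.1 - p.1) ≠ 0) :
      InEnd atBot q ↔ ¬ InEnd atTop p := by
    refine ⟨fun hq hp => not_eventually_mem_opposite_rays hE.1 hdense hdense' h hp hq, fun hp => ?_⟩
    by_contra hq
    exact not_eventually_mem_opposite_rays hE.2 hdense' (by rwa [compl_compl]) h
      (hcompl (.inl rfl) hp) (hcompl (.inr rfl) hq)
  have hconst (p q : Heisenberg) : InEnd atTop p ↔ InEnd atTop q := by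
    obtain ⟨c, hp, hq⟩ := exists_area_sub_ne_zero hv p.1 q.1
    rw [← not_iff_not, ← hopposite p (c, 0) hp, hopposite q (c, 0) hq]
  by_cases htop : InEnd atTop 0
  · exact .inl (isRecessionDirection_of_eventually hE.1 fun p => (hconst p 0).2 htop)
  · refine .inr (isRecessionDirection_of_eventually hE.1 fun p => ?_)
    obtain ⟨c, hc, -⟩ := exists_area_sub_ne_zero hv p.1 p.1
    have hbot : InEnd atBot p := (hopposite (c, 0) p (by rwa [area_sub_comm, neg_ne_zero])).2
      fun h => htop ((hconst _ 0).1 h)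
    simpa only [smul_neg, neg_smul] using tendsto_neg_atTop_atBot.eventually hbot

theorem frame_mem_of_isRecessionDirection (hv : IsRecessionDirection E v)
    (hw : IsRecessionDirection E w) (h : area v w ≠ 0) {p : Heisenberg} (hp : p ∈ E)
    {z : Heisenberg} (hy : 0 < z.1.2) (ht : |z.2| < 2 * z.1.1 * z.1.2) :
    frame p v w h z ∈ E := by
  obtain ⟨m, hm⟩ : ∃ m, m * (2 * z.1.2) = z.2 := ⟨z.2 / (2 * z.1.2), by field_simp⟩
  rw [abs_lt, ← hm] at ht
  have hmlt : -m ≤ z.1.1 ∧ m ≤ z.1.1 := ⟨by nlinarith [ht.1], by nlinarith [ht.2]⟩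
  have hmoves := eq_move_move_move (p := 0) (z := z) (m := m) (by simp [alignDefect, area, hm])
  have hzero : frame p v w h 0 = p := by ext <;> simp [frame_apply, area]
  rw [hmoves, frame_move, frame_move, frame_move, hzero]
  simp only [Prod.fst_zero, Prod.snd_zero, sub_zero, zero_smul, add_zero, zero_add]
  exact hv _ (hw _ (hv _ hp _ (by linarith [hmlt.2])) _ hy.le) _ (by linarith [hmlt.1])

theorem interior_nonempty_of_isRecessionDirection (hne : E.Nonempty)
    (hv : IsRecessionDirection E v) (hw : IsRecessionDirection E w) (h : area v w ≠ 0) :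
    (interior E).Nonempty := by
  obtain ⟨p, hp⟩ := hne
  let e := (frame p v w h).toHomeomorph
  have hopen : IsOpen {z : Heisenberg | 0 < z.1.2 ∧ |z.2| < 2 * z.1.1 * z.1.2} := by
    simp only [ofPred_and]
    exact (isOpen_lt (by fun_prop) (by fun_prop)).inter (isOpen_lt (by fun_prop) (by fun_prop))
  have hmem : ((1, 1), 0) ∈ interior (e ⁻¹' E) := interior_maximal
    (fun z hz => frame_mem_of_isRecessionDirection hv hw h hp hz.1 hz.2) hopen (by simp)
  rw [← e.preimage_interior E] at hmem
  exact ⟨_, hmem⟩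

theorem interior_nonempty_or_interior_compl_nonempty (hE : MonotoneAlong Aligned E) :
    (interior E).Nonempty ∨ (interior Eᶜ).Nonempty := by
  by_contra! hempty
  have hdense : Dense E := by
    rw [← compl_compl E, ← interior_eq_empty_iff_dense_compl]; exact hempty.2
  have hdense' : Dense Eᶜ := interior_eq_empty_iff_dense_compl.1 hempty.1
  have hdir (v : ℝ × ℝ) (hv : v ≠ 0) : ∃ σ : ℝ, σ ≠ 0 ∧ IsRecessionDirection E (σ • v) := by
    rcases isRecessionDirection_or_neg hE hdense hdense' hv with h | h
    · exact ⟨1, one_ne_zero, by rwa [one_smul]⟩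
    · exact ⟨-1, by norm_num, by rwa [neg_one_smul]⟩
  obtain ⟨σ, hσ, hx⟩ := hdir (1, 0) (by simp)
  obtain ⟨τ, hτ, hy⟩ := hdir (0, 1) (by simp)
  have harea : area (σ • (1, 0)) (τ • (0, 1)) ≠ 0 := by simp [area, hσ, hτ]
  exact (interior_nonempty_of_isRecessionDirection hdense.nonempty hx hy harea).ne_empty hempty.1

end Recession

section FlatSets

variable {B : Set Heisenberg} {a b : Heisenberg} {v w : ℝ × ℝ}

theorem mem_horizontalLine_self (p : Heisenberg) (v : ℝ × ℝ) : p ∈ horizontalLine p v :=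
  ⟨0, by simp only [zero_smul, move_zero]⟩

theorem horizontalLine_move_subset (p : Heisenberg) (v : ℝ × ℝ) (s : ℝ) :
    horizontalLine (move p (s • v)) v ⊆ horizontalLine p v := by
  rintro _ ⟨t, rfl⟩
  exact ⟨s + t, (move_smul_move_smul p v s t).symm⟩

theorem horizontalLine_smul_subset (p : Heisenberg) (v : ℝ × ℝ) (r : ℝ) :
    horizontalLine p (r • v) ⊆ horizontalLine p v := by
  rintro _ ⟨s, rfl⟩
  exact ⟨s * r, by simp only [mul_smul]⟩

theorem aligned_of_mem_horizontalLine {p q : Heisenberg} (hp : p ∈ horizontalLine a v)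
    (hq : q ∈ horizontalLine a v) : Aligned p q := by
  obtain ⟨⟨s, rfl⟩, t, rfl⟩ := hp, hq
  simpa only [← lineMap_move] using isAlignment_aligned.lineMap (aligned_move a v) s t

theorem mem_of_quadric_eq_zero_of_flatAlong (hB : FlatAlong Aligned B)
    (h₀ : ∀ s : ℝ, ((s, 0), 0) ∈ B) (h₁ : ∀ s : ℝ, ((s, 1), 2 * s) ∈ B) {z : Heisenberg}
    (hz : quadric z = 0) : z ∈ B := by
  by_cases hy : z.1.2 = 0
  · have : z = ((z.1.1, 0), 0) := by
      ext <;> simp_all [quadric]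
    rw [this]
    exact h₀ _
  · rw [eq_lineMap_of_quadric_eq_zero hz hy]
    exact hB (h₀ _) (h₁ _) (aligned_of_quadric_ruling _) _

-- The slope is chosen so that the quadric meets the line in parameters `r` with
-- `-K * r ^ 2 + β * r + K = 0`, `K = quadric z`, an equation with the distinct real roots
-- `r` and `-1 / r`.
theorem mem_of_quadric_subset (hB : FlatAlong Aligned B)
    (hquadric : ∀ z, quadric z = 0 → z ∈ B) {z : Heisenberg} (hz : z.1.2 ≠ 1 / 2) : z ∈ B := by
  by_cases hK : quadric z = 0
  · exact hquadric z hK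
  have hz' : 1 - 2 * z.1.2 ≠ 0 := fun h => hz (by linarith)
  obtain ⟨slope, hslope⟩ : ∃ c, c * (2 * (1 - 2 * z.1.2)) = -quadric z - 4 * z.1.1 :=
    ⟨_, div_mul_cancel₀ _ (mul_ne_zero two_ne_zero hz')⟩
  let β := 4 * slope * z.1.2 * (1 - z.1.2) + 4 * z.1.1 * z.1.2 - 2 * z.2
  have hline (r : ℝ) : quadric (move z (r • (slope, 1))) =
      -quadric z * (r * r) + β * r + quadric z := by
    simp only [quadric, move, area, β, Prod.fst_add, Prod.snd_add, Prod.smul_fst, Prod.smul_snd,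
      smul_eq_mul] at *
    linear_combination r ^ 2 * hslope
  obtain ⟨r, hr⟩ := exists_quadratic_eq_zero (neg_ne_zero.2 hK) (b := β) (c := quadric z)
    ⟨√(discrim (-quadric z) β (quadric z)), (Real.mul_self_sqrt (by
      rw [discrim]; nlinarith [sq_nonneg β, sq_nonneg (quadric z)])).symm⟩
  have hr0 : r ≠ 0 := by
    rintro rfl
    exact hK (by simpa using hr)
  have hr' : -quadric z * (-r⁻¹ * -r⁻¹) + β * -r⁻¹ + quadric z = 0 := by
    field_simp
    linear_combination -hr
  have hdistinct : r ≠ -r⁻¹ := fun h => by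
    have : r * r = -1 := by rw [eq_neg_iff_add_eq_zero] at h; field_simp at h; linarith
    nlinarith
  exact horizontalLine_subset hB hdistinct (hquadric _ ((hline r).trans hr))
    (hquadric _ ((hline _).trans hr')) (mem_horizontalLine_self z _)

theorem eq_univ_of_parallel_lines (hB : FlatAlong Aligned B) (hclosed : IsClosed B)
    (ha : horizontalLine a v ⊆ B) (hb : horizontalLine b v ⊆ B)
    (h : area v (b.1 - a.1) ≠ 0) : B = univ := by
  obtain ⟨r, hr⟩ := exists_frame_eq_move h
  let e := frame (move a (r • v)) v (b.1 - a.1) h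
  have hquadric : ∀ z, quadric z = 0 → z ∈ e ⁻¹' B := fun z hz =>
    mem_of_quadric_eq_zero_of_flatAlong (flatAlong_preimage_frame _ h hB)
      (fun s => ha ⟨r + s, (hr s).1.symm⟩) (fun s => hb ⟨r + s, (hr s).2.symm⟩) hz
  have hsub : {z : Heisenberg | z.1.2 ≠ 1 / 2} ⊆ e ⁻¹' B := fun z hz =>
    mem_of_quadric_subset (flatAlong_preimage_frame _ h hB) hquadric hz
  have hdense : Dense {z : Heisenberg | z.1.2 ≠ 1 / 2} :=
    (dense_compl_singleton (1 / 2 : ℝ)).preimage (isOpenMap_snd.comp isOpenMap_fst)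
  have hpreimage : e ⁻¹' B = univ :=
    (hclosed.preimage e.continuous).closure_eq ▸ (hdense.mono hsub).closure_eq
  exact eq_univ_iff_forall.2 (e.surjective.forall.2 fun z => eq_univ_iff_forall.1 hpreimage z)

theorem horizontalLine_subset_of_aligned (hB : FlatAlong Aligned B) (ha : a ∈ B) (hb : b ∈ B)
    (h : Aligned a b) {s : ℝ} (hs : s ≠ 0) (hv : b.1 - a.1 = s • v) : horizontalLine a v ⊆ B := by
  refine horizontalLine_subset hB hs.symm ?_ (?_ : move a (s • v) ∈ B)
  · rwa [zero_smul, move_zero]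
  · rwa [← hv, ← h.eq_move]

-- If the lines pass above each other, points of them are joined by two parallel lines.
theorem snd_eq_of_crossing_lines (hB : FlatAlong Aligned B) (hclosed : IsClosed B)
    (hB' : B ≠ univ) (ha : horizontalLine a v ⊆ B) (hb : horizontalLine b w ⊆ B)
    (h : area v w ≠ 0) (hfst : a.1 = b.1) : a.2 = b.2 := by
  by_contra hne
  obtain ⟨μ, hμ⟩ : ∃ μ, μ * (2 * area v w) = a.2 - b.2 :=
    ⟨_, div_mul_cancel₀ _ (mul_ne_zero two_ne_zero h)⟩
  have haligned (σ : ℝ) (hσ : σ * σ = 1) : Aligned (move a (σ • v)) (move b (σ • μ • w)) := by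
    simp only [Aligned, alignDefect, move, area, hfst, Prod.fst_add, Prod.snd_add, Prod.smul_fst,
      Prod.smul_snd, smul_eq_mul] at *
    linear_combination hμ + 2 * μ * (v.1 * w.2 - v.2 * w.1) * hσ
  have hline (σ : ℝ) (hσ : σ * σ = 1) : horizontalLine (move a (σ • v)) (μ • w - v) ⊆ B := by
    refine horizontalLine_subset_of_aligned hB (ha ⟨σ, rfl⟩) (hb ⟨σ * μ, by simp only [mul_smul]⟩)
      (haligned σ hσ) (left_ne_zero_of_mul (hσ.trans_ne one_ne_zero)) ?_
    simp only [move, hfst, add_sub_add_left_eq_sub, smul_sub]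
  refine hB' (eq_univ_of_parallel_lines hB hclosed (hline 1 (by norm_num))
    (hline (-1) (by norm_num)) ?_)
  have harea : area (μ • w - v) ((move a ((-1 : ℝ) • v)).1 - (move a ((1 : ℝ) • v)).1) =
      a.2 - b.2 := by
    simp [← hμ, move, area]
    ring
  rw [harea]
  exact sub_ne_zero.2 hne

theorem exists_smul_sub_smul_eq (h : area v w ≠ 0) (d : ℝ × ℝ) : ∃ s r : ℝ, s • v - r • w = d := by
  refine ⟨area d w / area v w, -(area v d / area v w), ?_⟩
  ext <;> simp only [Prod.fst_sub, Prod.snd_sub, Prod.smul_fst, Prod.smul_snd, smul_eq_mul] <;>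
    field_simp <;> simp only [area] <;> ring

theorem exists_move_eq_move (hB : FlatAlong Aligned B) (hclosed : IsClosed B) (hB' : B ≠ univ)
    (ha : horizontalLine a v ⊆ B) (hb : horizontalLine b w ⊆ B) (h : area v w ≠ 0) :
    ∃ s r : ℝ, move a (s • v) = move b (r • w) := by
  obtain ⟨s, r, hsr⟩ := exists_smul_sub_smul_eq h (b.1 - a.1)
  have hfst : (move a (s • v)).1 = (move b (r • w)).1 := by
    simp only [move]
    linear_combination hsr
  exact ⟨s, r, Prod.ext hfst (snd_eq_of_crossing_lines hB hclosed hB'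
    ((horizontalLine_move_subset a v s).trans ha) ((horizontalLine_move_subset b w r).trans hb)
    h hfst)⟩

theorem alignDefect_move_smul_move_smul (p : Heisenberg) (v w : ℝ × ℝ) (r s : ℝ) :
    alignDefect (move p (r • v)) (move p (s • w)) = r * s * (2 * area v w) := by
  simp only [alignDefect, move, area, Prod.fst_add, Prod.snd_add, Prod.smul_fst, Prod.smul_snd,
    smul_eq_mul]
  ring

theorem aligned_of_crossing_lines (hB : FlatAlong Aligned B) (hclosed : IsClosed B)
    (hB' : B ≠ univ) (hv : horizontalLine a v ⊆ B) (hw : horizontalLine a w ⊆ B)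
    (h : area v w ≠ 0) {o : ℝ × ℝ} (ho : horizontalLine b o ⊆ B) (how : area o w ≠ 0) :
    Aligned a b := by
  obtain ⟨s, r, hsr⟩ := exists_move_eq_move hB hclosed hB' ho hw how
  by_cases hr : r = 0
  · rw [hr, zero_smul, move_zero] at hsr
    exact hsr ▸ aligned_of_mem_horizontalLine ⟨s, rfl⟩ (mem_horizontalLine_self b o)
  by_cases hov : area o v = 0
  · obtain ⟨c, rfl⟩ := exists_smul_of_area_eq_zero (by rintro rfl; simp [area] at how) hov
    refine absurd (eq_univ_of_parallel_lines hB hclosed hv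
      ((horizontalLine_smul_subset b o c).trans ho) ?_) hB'
    have hfst : b.1 - a.1 = r • w - s • o := by
      have := congrArg Prod.fst hsr
      simp only [move] at this
      linear_combination this
    have harea : area (c • o) (r • w - s • o) = r * area (c • o) w := by
      simp only [area, Prod.fst_sub, Prod.snd_sub, Prod.smul_fst, Prod.smul_snd, smul_eq_mul]
      ring
    rw [hfst, harea]
    exact mul_ne_zero hr h
  · obtain ⟨s', r', hsr'⟩ := exists_move_eq_move hB hclosed hB' ho hv hov
    have haligned : Aligned (move a (r' • v)) (move a (r • w)) :=
      hsr ▸ hsr' ▸ aligned_of_mem_horizontalLine ⟨s', rfl⟩ ⟨s, rfl⟩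
    rw [Aligned, alignDefect_move_smul_move_smul] at haligned
    obtain rfl : r' = 0 := by simpa [hr, h] using haligned
    rw [zero_smul, move_zero] at hsr'
    exact hsr' ▸ aligned_of_mem_horizontalLine ⟨s', rfl⟩ (mem_horizontalLine_self b o)

/-- The linear functional `z ↦ area v z.1 + c * z.2`, whose level sets are planes. -/
def areaFunctional (v : ℝ × ℝ) (c : ℝ) : StrongDual ℝ Heisenberg :=
  (v.1 • ContinuousLinearMap.snd ℝ ℝ ℝ - v.2 • ContinuousLinearMap.fst ℝ ℝ ℝ).comp
    (ContinuousLinearMap.fst ℝ (ℝ × ℝ) ℝ) + c • ContinuousLinearMap.snd ℝ (ℝ × ℝ) ℝ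

theorem areaFunctional_apply (v : ℝ × ℝ) (c : ℝ) (z : Heisenberg) :
    areaFunctional v c z = area v z.1 + c * z.2 := rfl

theorem areaFunctional_zero_ne_zero (hv : v ≠ 0) : areaFunctional v 0 ≠ 0 := by
  obtain ⟨w, hw⟩ := exists_area_eq_one hv
  intro h
  simpa [areaFunctional_apply, hw] using DFunLike.congr_fun h (w, 0)

theorem areaFunctional_one_ne_zero (v : ℝ × ℝ) : areaFunctional v 1 ≠ 0 := fun h => by
  simpa [areaFunctional_apply, area] using DFunLike.congr_fun h (0, 1)

theorem exists_subset_plane_of_crossing_lines (hB : FlatAlong Aligned B) (hclosed : IsClosed B)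
    (hB' : B ≠ univ) (hlines : ∀ p ∈ B, ∃ v ≠ 0, horizontalLine p v ⊆ B)
    (hv : horizontalLine a v ⊆ B) (hw : horizontalLine a w ⊆ B) (h : area v w ≠ 0) :
    ∃ ℓ : StrongDual ℝ Heisenberg, ℓ ≠ 0 ∧ ∃ k, B ⊆ {z | ℓ z = k} := by
  refine ⟨areaFunctional ((2 : ℝ) • a.1) 1, areaFunctional_one_ne_zero _, a.2, fun z hz => ?_⟩
  obtain ⟨o, ho, hzo⟩ := hlines z hz
  have haligned : Aligned a z := by
    by_cases how : area o w = 0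
    · refine aligned_of_crossing_lines hB hclosed hB' hw hv (w := v) ?_ hzo fun hov => h ?_
      · simpa [area, sub_eq_zero, mul_comm, eq_comm] using h
      · obtain ⟨r, rfl⟩ := exists_smul_of_area_eq_zero ho how
        obtain ⟨s, rfl⟩ := exists_smul_of_area_eq_zero ho hov
        simp only [area, Prod.smul_fst, Prod.smul_snd, smul_eq_mul]
        ring
    · exact aligned_of_crossing_lines hB hclosed hB' hv hw h hzo how
  simp only [Aligned, alignDefect, area, mem_ofPred_eq, areaFunctional_apply, Prod.smul_fst,
    Prod.smul_snd, smul_eq_mul] at *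
  linear_combination haligned

theorem exists_subset_plane (hB : FlatAlong Aligned B) (hclosed : IsClosed B) (hB' : B ≠ univ)
    (hlines : ∀ p ∈ B, ∃ v ≠ 0, horizontalLine p v ⊆ B) (hne : B.Nonempty) :
    ∃ ℓ : StrongDual ℝ Heisenberg, ℓ ≠ 0 ∧ ∃ k, B ⊆ {z | ℓ z = k} := by
  obtain ⟨p, hp⟩ := hne
  obtain ⟨v, hv0, hv⟩ := hlines p hp
  by_cases hcross : ∃ q w, horizontalLine q w ⊆ B ∧ area v w ≠ 0
  · obtain ⟨q, w, hw, h⟩ := hcross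
    obtain ⟨s, r, hsr⟩ := exists_move_eq_move hB hclosed hB' hv hw h
    exact exists_subset_plane_of_crossing_lines hB hclosed hB' hlines
      ((horizontalLine_move_subset p v s).trans hv)
      (hsr ▸ (horizontalLine_move_subset q w r).trans hw) h
  push Not at hcross
  refine ⟨areaFunctional v 0, areaFunctional_zero_ne_zero hv0, area v p.1, fun z hz => ?_⟩
  obtain ⟨w, hw0, hw⟩ := hlines z hz
  have hwv : area w v = 0 := by
    have := hcross z w hw
    simp only [area] at *
    linarith
  obtain ⟨r, rfl⟩ := exists_smul_of_area_eq_zero hw0 hwv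
  have hsub : area (r • w) (z.1 - p.1) = 0 := by
    by_contra h
    exact hB' (eq_univ_of_parallel_lines hB hclosed hv ((horizontalLine_smul_subset z w r).trans hw)
      h)
  simp only [mem_ofPred_eq, areaFunctional_apply, area, Prod.smul_fst, Prod.smul_snd,
    Prod.fst_sub, Prod.snd_sub] at *
  linear_combination hsub

end FlatSets

section MonotoneSets

variable {E : Set Heisenberg} {ℓ : StrongDual ℝ Heisenberg} {k : ℝ}

theorem flatAlong_level_set : FlatAlong Aligned {z | ℓ z = k} := by
  intro p hp q hq _ s
  simp only [mem_ofPred_eq, AffineMap.lineMap_apply_module, map_add, map_smul, smul_eq_mul] at *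
  linear_combination (1 - s) * hp + s * hq

theorem apply_move_eq_of_mem_frontier (hE : MonotoneAlong Aligned E)
    (hsub : {z | ℓ z ≠ k} ⊆ interior E) {p : Heisenberg} (hp : p ∈ frontier E) (u : ℝ × ℝ) :
    ℓ (move p u) = k := by
  by_contra hu
  have hℓp : ℓ p = k := by
    by_contra h
    exact hp.2 (hsub h)
  have hbeyond := lineMap_mem_interior_compl hE.1 (isAlignment_aligned.symm (aligned_move p u))
    (hsub hu) hp one_lt_two
  refine interior_subset hbeyond (interior_subset (hsub fun h => hu ?_))
  simp only [AffineMap.lineMap_apply_module, map_add, map_smul, smul_eq_mul] at h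
  linear_combination 2 * hℓp - h

theorem not_subset_interior (hE : MonotoneAlong Aligned E) (hne : (frontier E).Nonempty)
    (hℓ : ℓ ≠ 0) : ¬ {z | ℓ z ≠ k} ⊆ interior E := by
  intro hsub
  obtain ⟨p, hp⟩ := hne
  obtain ⟨v, hv, hline⟩ := exists_horizontalLine_subset_frontier hE hp
  obtain ⟨w, hw⟩ := exists_area_eq_one hv
  have hplane (q : Heisenberg) (hq : q ∈ frontier E) : horizontalLine q w ⊆ {z | ℓ z = k} := by
    rintro _ ⟨s, rfl⟩
    exact apply_move_eq_of_mem_frontier hE hsub hq _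
  have huniv : {z | ℓ z = k} = univ := by
    refine eq_univ_of_parallel_lines flatAlong_level_set
      (isClosed_eq ℓ.continuous continuous_const) (hplane p hp)
      (hplane (move p v) (hline ⟨1, by simp only [one_smul]⟩)) ?_
    simp [move, area] at *
    linarith
  have hconst (z : Heisenberg) : ℓ z = k := eq_univ_iff_forall.1 huniv z
  exact hℓ (ContinuousLinearMap.ext fun z => (hconst z).trans ((hconst 0).symm.trans ℓ.map_zero))

theorem frontier_ne_univ (hE : MonotoneAlong Aligned E) : frontier E ≠ univ := by
  intro h
  have hcover : interior E ∪ interior Eᶜ = ∅ := by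
    rw [← compl_frontier_eq_union_interior, h, compl_univ]
  exact (union_nonempty.2 (interior_nonempty_or_interior_compl_nonempty hE)).ne_empty hcover

theorem exists_isAlmostHalfSpace_of_frontier_subset (hE : MonotoneAlong Aligned E)
    (hne : (frontier E).Nonempty) (hℓ : ℓ ≠ 0) (hplane : frontier E ⊆ {z | ℓ z = k}) :
    ∃ ℓ k, IsAlmostHalfSpace ℓ k E := by
  have hside {S : Set Heisenberg} (hS : Convex ℝ S) (hdisj : ∀ z ∈ S, ℓ z ≠ k) :
      S ⊆ interior E ∨ S ⊆ interior Eᶜ := by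
    refine hS.isPreconnected.subset_or_subset isOpen_interior isOpen_interior
      (disjoint_compl_right.mono interior_subset interior_subset) ?_
    rw [← compl_frontier_eq_union_interior]
    exact fun z hz hzE => hdisj z hz (hplane hzE)
  have hcases {A : Set Heisenberg} (hA : {z | ℓ z < k} ⊆ A) (hA' : {z | k < ℓ z} ⊆ A) :
      {z | ℓ z ≠ k} ⊆ A := fun z hz => hz.lt_or_gt.elim (fun h => hA h) fun h => hA' h
  have hlinear : IsLinearMap ℝ ℓ := ℓ.isBoundedLinearMap.toIsLinearMap
  rcases hside (convex_halfSpace_lt hlinear k) (fun z hz => ne_of_lt hz) with hlt | hlt <;>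
    rcases hside (convex_halfSpace_gt hlinear k) (fun z hz => ne_of_gt hz) with hgt | hgt
  · exact absurd (hcases hlt hgt) (not_subset_interior hE hne hℓ)
  · exact ⟨-ℓ, -k, neg_ne_zero.2 hℓ, fun h => interior_subset (hlt (neg_lt_neg_iff.1 h)),
      fun h => interior_subset (hgt (neg_lt_neg_iff.1 h))⟩
  · exact ⟨ℓ, k, hℓ, fun h => interior_subset (hgt h), fun h => interior_subset (hlt h)⟩
  · exact absurd (hcases hlt hgt)
      (not_subset_interior hE.compl (by rwa [frontier_compl]) hℓ)

theorem exists_isAlmostHalfSpace (hE : MonotoneAlong Aligned E) (hempty : E ≠ ∅)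
    (huniv : E ≠ univ) : ∃ ℓ k, IsAlmostHalfSpace ℓ k E := by
  have hne : (frontier E).Nonempty := by
    rw [nonempty_iff_ne_empty, Ne, ← isClopen_iff_frontier_eq_empty, isClopen_iff]
    tauto
  obtain ⟨ℓ, hℓ, k, hplane⟩ := exists_subset_plane (flatAlong_frontier hE) isClosed_frontier
    (frontier_ne_univ hE) (fun p hp => exists_horizontalLine_subset_frontier hE hp) hne
  exact exists_isAlmostHalfSpace_of_frontier_subset hE hne hℓ hplane

end MonotoneSets

section FlatSetsWithInterior

variable {B : Set Heisenberg}

theorem move_mem_of_mem_interior (hB : FlatAlong Aligned B) {p : Heisenberg} (hp : p ∈ interior B)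
    (v : ℝ × ℝ) : move p v ∈ B := by
  have hcont : Continuous fun s : ℝ => move p (s • v) :=
    continuous_move.comp (continuous_const.prodMk (continuous_id.smul continuous_const))
  have hnear : ∀ᶠ s in 𝓝[≠] (0 : ℝ), move p (s • v) ∈ B :=
    ((hcont.tendsto 0).mono_left nhdsWithin_le_nhds).eventually
      (by simpa [move_zero] using mem_interior_iff_mem_nhds.1 hp)
  obtain ⟨s, hs, hs0⟩ := (hnear.and self_mem_nhdsWithin).exists
  refine horizontalLine_subset hB (Ne.symm hs0) ?_ hs ⟨1, by simp only [one_smul]⟩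
  simpa [move_zero] using interior_subset hp

theorem move_mem_interior (hB : FlatAlong Aligned B) {p : Heisenberg} (hp : p ∈ interior B)
    (v : ℝ × ℝ) : move p v ∈ interior B := by
  have hcont : Continuous fun z : Heisenberg => move z (-v) :=
    continuous_move.comp (continuous_id.prodMk continuous_const)
  refine interior_maximal (fun z hz => ?_) (isOpen_interior.preimage hcont)
    (by rwa [mem_preimage, move_move_neg])
  simpa only [move_move_neg] using move_mem_of_mem_interior hB hz (- -v)

theorem eq_univ_of_interior_nonempty (hB : FlatAlong Aligned B) (h : (interior B).Nonempty) :
    B = univ := by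
  obtain ⟨p, hp⟩ := h
  refine eq_univ_of_forall fun z => interior_subset ?_
  have hq := move_mem_interior hB hp (0, z.1.2 - p.1.2 - 1)
  set q := move p (0, z.1.2 - p.1.2 - 1) with hq_def
  have hsnd : z.1.2 - q.1.2 = 1 := by
    simp only [hq_def, move, Prod.snd_add]
    ring
  rw [eq_move_move_move (p := q) (z := z) (m := alignDefect q z / 2) (by rw [hsnd]; ring)]
  exact move_mem_interior hB (move_mem_interior hB (move_mem_interior hB hq _) _) _

end FlatSetsWithInterior

section AffineFunctions

/-- The slope of `f` in the horizontal direction `v` at the point `(0, t)` of the vertical axis. -/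
def axisSlope (f : Heisenberg → ℝ) (v : ℝ × ℝ) (t : ℝ) : ℝ := f (v, t) - f (0, t)

variable {f : Heisenberg → ℝ} (hf : AffineAlong Aligned f)
include hf

theorem apply_move_smul (p : Heisenberg) (v : ℝ × ℝ) (s : ℝ) :
    f (move p (s • v)) = f p + s * (f (move p v) - f p) := by
  rw [← lineMap_move, hf (aligned_move p v), AffineMap.lineMap_apply_ring]
  ring

theorem apply_smul_prodMk (r : ℝ) (v : ℝ × ℝ) (t : ℝ) :
    f (r • v, t) = f (0, t) + r * axisSlope f v t := by
  simpa [move, area, axisSlope] using apply_move_smul hf (0, t) v r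

theorem apply_eq_midpoint (x y t : ℝ) :
    f ((x, y), t) = (f ((2 * x, 0), t + 4 * x * y) + f ((0, 2 * y), t - 4 * x * y)) / 2 := by
  have haligned : Aligned ((2 * x, 0), t + 4 * x * y) ((0, 2 * y), t - 4 * x * y) := by
    simp only [Aligned, alignDefect, area]
    ring
  have hmid : lineMap ((2 * x, 0), t + 4 * x * y) ((0, 2 * y), t - 4 * x * y) (1 / 2 : ℝ) =
      (((x, y), t) : Heisenberg) := by
    ext <;> simp [AffineMap.lineMap_apply_ring] <;> ring
  rw [← hmid, hf haligned, AffineMap.lineMap_apply_ring]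
  ring

-- Comparing the midpoint identities at `((x, y), t)` and at its reflection `((-x, -y), t)` shows
-- that `f` is midpoint affine on the vertical axis.
theorem apply_eq_add_axisSlope (x y t : ℝ) :
    f ((x, y), t) = f (0, t) + x * axisSlope f (1, 0) (t + 4 * x * y) +
      y * axisSlope f (0, 1) (t - 4 * x * y) := by
  have hx (a τ : ℝ) : f ((a, 0), τ) = f (0, τ) + a * axisSlope f (1, 0) τ := by
    simpa using apply_smul_prodMk hf a (1, 0) τ
  have hy (a τ : ℝ) : f ((0, a), τ) = f (0, τ) + a * axisSlope f (0, 1) τ := by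
    simpa using apply_smul_prodMk hf a (0, 1) τ
  have hreflect : f ((-x, -y), t) = f (0, t) + -axisSlope f (x, y) t := by
    simpa using apply_smul_prodMk hf (-1) (x, y) t
  have hpos := apply_eq_midpoint hf x y t
  have hneg := apply_eq_midpoint hf (-x) (-y) t
  rw [hx, hy] at hpos hneg
  rw [show 4 * -x * -y = 4 * x * y by ring] at hneg
  rw [axisSlope] at hreflect
  linear_combination hpos / 2 - hneg / 2 + hreflect / 2

-- Homogeneity along the rays through `((1, s), t)` and `((2, s / 2), t)` gives two independent
-- linear relations between the increments of the two slopes.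
theorem axisSlope_eq_of_ratio_four (t s : ℝ) :
    axisSlope f (1, 0) (t + 16 * s) = axisSlope f (1, 0) (t + 4 * s) ∧
      s * axisSlope f (0, 1) (t - 16 * s) = s * axisSlope f (0, 1) (t - 4 * s) := by
  have hdouble (x y : ℝ) (hxy : x * y = s) :
      2 * x * axisSlope f (1, 0) (t + 16 * s) + 2 * y * axisSlope f (0, 1) (t - 16 * s) =
        2 * (x * axisSlope f (1, 0) (t + 4 * s) + y * axisSlope f (0, 1) (t - 4 * s)) := by
    have hray := apply_smul_prodMk hf 2 (x, y) t
    rw [axisSlope, Prod.smul_mk, apply_eq_add_axisSlope hf, apply_eq_add_axisSlope hf x y,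
      smul_eq_mul, smul_eq_mul, show 4 * (2 * x) * (2 * y) = 16 * s by rw [← hxy]; ring,
      show 4 * x * y = 4 * s by rw [← hxy]; ring] at hray
    linear_combination hray
  have h₁ := hdouble 1 s (one_mul s)
  have h₂ := hdouble 2 (s / 2) (by ring)
  constructor
  · linear_combination h₂ / 3 - h₁ / 6
  · linear_combination 2 * h₁ / 3 - h₂ / 3

theorem axisSlope_fst_eq (t t' : ℝ) : axisSlope f (1, 0) t = axisSlope f (1, 0) t' := by
  convert (axisSlope_eq_of_ratio_four hf (t' - (t - t') / 3) ((t - t') / 12)).1 using 2 <;> ring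

theorem axisSlope_snd_eq (t t' : ℝ) : axisSlope f (0, 1) t = axisSlope f (0, 1) t' := by
  rcases eq_or_ne t t' with rfl | hne
  · rfl
  have hscale := (axisSlope_eq_of_ratio_four hf (t' - (t - t') / 3) (-((t - t') / 12))).2
  have hs : -((t - t') / 12) ≠ 0 := neg_ne_zero.2 (div_ne_zero (sub_ne_zero.2 hne) (by norm_num))
  convert mul_left_cancel₀ hs hscale using 2 <;> ring

theorem apply_eq_axis_add (x y t : ℝ) : f ((x, y), t) =
    f (0, t) + x * axisSlope f (1, 0) 0 + y * axisSlope f (0, 1) 0 := by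
  rw [apply_eq_add_axisSlope hf, axisSlope_fst_eq hf _ 0, axisSlope_snd_eq hf _ 0]

theorem apply_axis (t : ℝ) : f (0, t) = f 0 + t * (f (0, 1) - f 0) := by
  have hmove (s : ℝ) : move ((0, 1), 0) (s • (1 / 2, 0)) = ((s / 2, 1), s) := by
    ext <;> simp [move, area] <;> ring
  have hline := apply_move_smul hf ((0, 1), 0) (1 / 2, 0) t
  rw [hmove, ← one_smul ℝ ((1 / 2, 0) : ℝ × ℝ), hmove] at hline
  rw [apply_eq_axis_add hf (t / 2), apply_eq_axis_add hf (1 / 2), apply_eq_axis_add hf 0,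
    show ((0, 0) : Heisenberg) = 0 from rfl] at hline
  linear_combination hline

theorem exists_eq_apply_add_of_affineAlong :
    ∃ (ℓ : StrongDual ℝ Heisenberg) (c : ℝ), ∀ p, f p = ℓ p + c := by
  refine ⟨areaFunctional (axisSlope f (0, 1) 0, -axisSlope f (1, 0) 0) (f (0, 1) - f 0), f 0, ?_⟩
  rintro ⟨⟨x, y⟩, t⟩
  rw [apply_eq_axis_add hf, apply_axis hf, areaFunctional_apply]
  simp only [area]
  ring

end AffineFunctions

section Product

variable {F : Set (Heisenberg × ℝ)}

theorem exists_isAlmostHalfSpace_of_ends (hF : MonotoneAlong (InvImage Aligned Prod.fst) F)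
    (h : (interior (fiberEnd atTop F \ fiberEnd atBot F)).Nonempty) :
    ∃ ℓ k, IsAlmostHalfSpace ℓ k F := by
  have hR := isAlignment_aligned
  rw [sdiff_eq, ← fiberEnd_compl (.inr rfl) hR hF.1] at h
  obtain ⟨f, hf⟩ := hF.1.exists_isAlmostEpigraph hR
    (eq_univ_of_interior_nonempty (hF.flatAlong_fiberEnd_inter hR) h)
  obtain ⟨ℓ, c, hℓ⟩ := exists_eq_apply_add_of_affineAlong (hf.affineAlong hR hF)
  exact ⟨_, c, hf.isAlmostHalfSpace hℓ⟩

theorem interior_closure_subset {A : Set Heisenberg} (hA : MonotoneAlong Aligned A) :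
    interior (closure A) ⊆ A := by
  by_cases hempty : A = ∅
  · simp [hempty]
  by_cases huniv : A = univ
  · simp [huniv]
  obtain ⟨ℓ, k, h⟩ := exists_isAlmostHalfSpace hA hempty huniv
  exact h.interior_closure_subset

theorem prodMk_mem_of_interior_ends (hF : MonotoneAlong (InvImage Aligned Prod.fst) F)
    (h : interior (fiberEnd atTop F \ fiberEnd atBot F) = ∅) {p : Heisenberg}
    (hp : p ∈ interior (fiberEnd atTop F)) (u : ℝ) : (p, u) ∈ F :=
  hF.1.prodMk_mem_of_mem_fiberEnd isAlignment_aligned (interior_subset hp)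
    (interior_subset_of_interior_diff_eq_empty h (interior_closure_subset
      (hF.monotoneAlong_fiberEnd (.inr rfl) isAlignment_aligned)) hp) u

theorem exists_isAlmostHalfSpace_prod (hF : MonotoneAlong (InvImage Aligned Prod.fst) F)
    (hempty : F ≠ ∅) (huniv : F ≠ univ) : ∃ ℓ k, IsAlmostHalfSpace ℓ k F := by
  have hR := isAlignment_aligned
  rcases (interior (fiberEnd atTop F \ fiberEnd atBot F)).eq_empty_or_nonempty with hup | hup
  swap
  · exact exists_isAlmostHalfSpace_of_ends hF hup
  rcases (interior (fiberEnd atTop Fᶜ \ fiberEnd atBot Fᶜ)).eq_empty_or_nonempty with hdown | hdown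
  swap
  · obtain ⟨ℓ, k, h⟩ := exists_isAlmostHalfSpace_of_ends hF.compl hdown
    exact ⟨-ℓ, -k, compl_compl F ▸ h.compl⟩
  have hmem := fun p => prodMk_mem_of_interior_ends hF hup (p := p)
  have hnotMem := fun p => prodMk_mem_of_interior_ends hF.compl hdown (p := p)
  rw [fiberEnd_compl (.inl rfl) hR hF.1] at hnotMem
  obtain ⟨ℓ, k, h⟩ := exists_isAlmostHalfSpace
    (hF.monotoneAlong_fiberEnd (.inl rfl) hR)
    (fun hA => hempty (eq_empty_of_forall_notMem fun z => hnotMem z.1 (by simp [hA]) z.2))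
    (fun hA => huniv (eq_univ_of_forall fun z => hmem z.1 (by simp [hA]) z.2))
  have h' := h.preimage (f := .fst ℝ Heisenberg ℝ) Prod.fst_surjective
  refine ⟨_, k, h'.ne_zero, fun {z} hz => hmem z.1 ?_ z.2, fun {z} hz => hnotMem z.1 ?_ z.2⟩
  · rwa [h.interior_eq]
  · rw [h.compl.interior_eq]
    exact neg_lt_neg hz

end Product

/-- The identification of `ℝ⁴`, in the coordinates `(x, y, u, t)`, with `ℍ × ℝ`. -/
def chart : (Fin 4 → ℝ) ≃L[ℝ] Heisenberg × ℝ :=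
  LinearEquiv.toContinuousLinearEquiv
    { toFun := fun v => (((v 0, v 1), v 3), v 2)
      map_add' := fun _ _ => rfl
      map_smul' := fun _ _ => rfl
      invFun := fun z => ![z.1.1.1, z.1.1.2, z.2, z.1.2]
      left_inv := fun v => by ext i; fin_cases i <;> rfl
      right_inv := fun _ => rfl }

theorem chart_symm_apply (z : Heisenberg × ℝ) :
    chart.symm z = ![z.1.1.1, z.1.1.2, z.2, z.1.2] := rfl

theorem chart_symm_lineMap {z w : Heisenberg × ℝ} (h : Aligned z.1 w.1) (s : ℝ) :
    chart.symm (lineMap z w s) = hmul (chart.symm z)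
      ![s * (w.1.1.1 - z.1.1.1), s * (w.1.1.2 - z.1.1.2), s * (w.2 - z.2), 0] := by
  simp only [Aligned, alignDefect, area] at h
  ext i
  fin_cases i <;> simp [chart_symm_apply, hmul, AffineMap.lineMap_apply_ring]
  · ring
  · ring
  · ring
  · linear_combination s * h

end Heisenberg

open Heisenberg

theorem HRConvex.convexAlong {C : Set (Fin 4 → ℝ)} (hC : HRConvex C) :
    ConvexAlong (InvImage Aligned Prod.fst) (chart.symm ⁻¹' C) := by
  intro z hz w hw h
  rw [segment_eq_image_lineMap]
  rintro _ ⟨s, hs, rfl⟩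
  rw [mem_preimage, chart_symm_lineMap h]
  refine hC _ hz _ _ _ ?_ s hs.1 hs.2
  have hend := chart_symm_lineMap h 1
  rw [AffineMap.lineMap_apply_one] at hend
  simpa only [one_mul, mem_preimage, hend] using hw

theorem PreciselyMonotone.exists_isAlmostHalfSpace {E : Set (Fin 4 → ℝ)}
    (hE : PreciselyMonotone E) (hempty : E ≠ ∅) (huniv : E ≠ univ) :
    ∃ ℓ k, IsAlmostHalfSpace ℓ k E := by
  obtain ⟨ℓ, k, h⟩ := exists_isAlmostHalfSpace_prod ⟨hE.1.convexAlong, hE.2.convexAlong⟩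
    (by simpa [preimage_eq_empty_iff] using hempty) (by simpa using huniv)
  have hpreimage := h.preimage (f := (chart : (Fin 4 → ℝ) →L[ℝ] Heisenberg × ℝ)) chart.surjective
  exact ⟨_, k, by simpa [preimage_preimage] using hpreimage⟩

/-- **Monotone sets in `ℍ×ℝ`:** the interiors of `E` and of its complement are the
two open half-spaces determined by an affine hyperplane. -/
theorem monotone_interiors_are_halfspaces
    (E : Set (Fin 4 → ℝ)) (hE : PreciselyMonotone E)
    (h1 : E ≠ ∅) (h2 : E ≠ Set.univ) :
    ∃ ν : Fin 4 → ℝ, ν ≠ 0 ∧ ∃ c : ℝ,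
      ((interior E = {v : Fin 4 → ℝ | c < ∑ i, v i * ν i} ∧
        interior Eᶜ = {v : Fin 4 → ℝ | ∑ i, v i * ν i < c}) ∨
       (interior E = {v : Fin 4 → ℝ | ∑ i, v i * ν i < c} ∧
        interior Eᶜ = {v : Fin 4 → ℝ | c < ∑ i, v i * ν i})) := by
  obtain ⟨ℓ, c, hℓ⟩ := hE.exists_isAlmostHalfSpace h1 h2
  refine ⟨fun i => ℓ (Pi.single i 1), fun hν => hℓ.ne_zero ?_, c, .inl ⟨?_, ?_⟩⟩
  · ext v
    simp [strongDual_apply_eq_sum, congrFun hν]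
  · simp only [hℓ.interior_eq, ← strongDual_apply_eq_sum]
  · simp only [hℓ.compl.interior_eq, ← strongDual_apply_eq_sum, neg_apply,
      neg_lt_neg_iff]
end
end
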